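/- arXiv:2506.16378 — 8 statements merged into one kernel-verified Lean document; each statement's English description precedes it below -/
import Mathlib

section
/- Let n > 2m ≥ 2 be integers and let β > 2m be real. Suppose φ : ℝⁿ → ℂ is measurable and there are constants C₁, C₂ > 0 such that |φ(x)| ≤ C₁⟨x⟩^{-β/2} for almost every x, and |φ(x)| ≤ C₂ ⟨x⟩^{-β/2} ∫_{ℝⁿ} |x−y|^{2m−n} ⟨y⟩^{-β/2} |φ(y)| dy for almost every x. Then there is a constant C (depending on n, m, β, C₁, C₂) such that |φ(x)| ≤ C ⟨x⟩^{2m−n−β/2} for almost every x ∈ ℝⁿ. -/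
open MeasureTheory

/-!
Write `⟨x⟩ = √(1 + ‖x‖ ^ 2)`. If `f` and `g` are nonnegative and decreasing on `(0, ∞)`, then
`f (‖x - y‖) * g (‖y‖)` is at most `(f * g) (‖x - y‖) + (f * g) (‖y‖)`, so
`∫ ‖x - y‖ ^ (-a) * ⟨y⟩ ^ (-b) dy` is bounded uniformly in `x` as soon as
`‖z‖ ^ (-a) * ⟨z⟩ ^ (-b)` is integrable, i.e. for `a < n < a + b`. Since `⟨x⟩ ≤ ⟨y⟩ + ‖x - y‖`, a
weight `⟨x⟩ ^ t` with `t ≤ α` can be shared between the two factors, and the integral for `a = α`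
decays like `⟨x⟩ ^ (-t)` whenever `t < α + b - n`.

Consequently, a bound `‖φ x‖ ≲ ⟨x⟩ ^ (-s)` inserted into the integral inequality
`‖φ x‖ ≲ ⟨x⟩ ^ (-γ) * ∫ ‖x - y‖ ^ (-α) * ⟨y⟩ ^ (-δ) * ‖φ y‖ dy` improves to
`‖φ x‖ ≲ ⟨x⟩ ^ (-t)` for every `t` in `[γ, α + γ]` with `t < s + ε`, where `ε = α + γ + δ - n > 0`
does not depend on `s`. The admissible exponents thus form a relatively open and closed subset of
`[γ, α + γ]` containing `γ`, hence all of it.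
-/

open Set Filter Topology Module

/-- The Japanese bracket. -/
local notation "⟪" x "⟫" => √(1 + ‖x‖ ^ 2)

section Inequalities

lemma mul_le_mul_add_mul_of_antitoneOn {ι : Type*} [LinearOrder ι] {f g : ι → ℝ} {S : Set ι}
    (hf : AntitoneOn f S) (hg : AntitoneOn g S) (hf₀ : ∀ s ∈ S, 0 ≤ f s) (hg₀ : ∀ s ∈ S, 0 ≤ g s)
    {s t : ι} (hs : s ∈ S) (ht : t ∈ S) : f s * g t ≤ f s * g s + f t * g t := by
  rcases le_total s t with hst | hts
  · exact le_add_of_le_of_nonneg (mul_le_mul_of_nonneg_left (hg hs ht hst) (hf₀ s hs))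
      (mul_nonneg (hf₀ t ht) (hg₀ t ht))
  · exact le_add_of_nonneg_of_le (mul_nonneg (hf₀ s hs) (hg₀ s hs))
      (mul_le_mul_of_nonneg_right (hf ht hs hts) (hg₀ t ht))

lemma add_rpow_le_two_rpow_mul_add {u v t : ℝ} (hu : 0 ≤ u) (hv : 0 ≤ v) (ht : 0 ≤ t) :
    (u + v) ^ t ≤ 2 ^ t * (u ^ t + v ^ t) := by
  have hmax : max u v ^ t ≤ u ^ t + v ^ t := by
    rcases max_choice u v with h | h <;> rw [h]
    · exact le_add_of_nonneg_right (Real.rpow_nonneg hv t)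
    · exact le_add_of_nonneg_left (Real.rpow_nonneg hu t)
  calc (u + v) ^ t ≤ (2 * max u v) ^ t := by
        gcongr
        linarith [le_max_left u v, le_max_right u v]
    _ = 2 ^ t * max u v ^ t := Real.mul_rpow zero_le_two (le_max_of_le_left hu)
    _ ≤ 2 ^ t * (u ^ t + v ^ t) := by gcongr

variable {E : Type*} [NormedAddCommGroup E]

lemma bracket_le_bracket_add_norm_sub (x y : E) : ⟪x⟫ ≤ ⟪y⟫ + ‖x - y‖ := by
  have hxy : ‖x‖ ≤ ‖y‖ + ‖x - y‖ := norm_le_norm_add_norm_sub' x y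
  have hy : ‖y‖ ≤ ⟪y⟫ := Real.le_sqrt_of_sq_le (by linarith)
  rw [Real.sqrt_le_left (by positivity)]
  calc 1 + ‖x‖ ^ 2 ≤ 1 + (‖y‖ + ‖x - y‖) ^ 2 := by gcongr
    _ = (1 + ‖y‖ ^ 2) + 2 * ‖y‖ * ‖x - y‖ + ‖x - y‖ ^ 2 := by ring
    _ ≤ (1 + ‖y‖ ^ 2) + 2 * ⟪y⟫ * ‖x - y‖ + ‖x - y‖ ^ 2 := by gcongr
    _ = (⟪y⟫ + ‖x - y‖) ^ 2 := by rw [add_sq, Real.sq_sqrt (by positivity)]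

lemma bracket_rpow_mul_norm_sub_rpow_mul_le {α b t : ℝ} (ht : 0 ≤ t) (x y : E) :
    ⟪x⟫ ^ t * (‖x - y‖ ^ (-α) * ⟪y⟫ ^ (-b)) ≤
      2 ^ t * (‖x - y‖ ^ (-α) * ⟪y⟫ ^ (-(b - t)) + ‖x - y‖ ^ (-(α - t)) * ⟪y⟫ ^ (-b)) := by
  have hx : ⟪x⟫ ^ t ≤ 2 ^ t * (⟪y⟫ ^ t + ‖x - y‖ ^ t) :=
    (Real.rpow_le_rpow (by positivity) (bracket_le_bracket_add_norm_sub x y) ht).trans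
      (add_rpow_le_two_rpow_mul_add (by positivity) (norm_nonneg _) ht)
  have hy : ⟪y⟫ ^ t * ⟪y⟫ ^ (-b) = ⟪y⟫ ^ (-(b - t)) := by
    rw [← Real.rpow_add (by positivity), neg_sub, sub_eq_add_neg]
  -- Only an inequality: for `x = y` and `t = α > 0` the left side is `0` and the right side is `1`.
  have hxy : ‖x - y‖ ^ t * ‖x - y‖ ^ (-α) ≤ ‖x - y‖ ^ (-(α - t)) := by
    rw [neg_sub, sub_eq_add_neg]
    exact Real.le_rpow_add (norm_nonneg _) t (-α)
  calc ⟪x⟫ ^ t * (‖x - y‖ ^ (-α) * ⟪y⟫ ^ (-b))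
      ≤ 2 ^ t * (⟪y⟫ ^ t + ‖x - y‖ ^ t) * (‖x - y‖ ^ (-α) * ⟪y⟫ ^ (-b)) := by gcongr
    _ = 2 ^ t * (‖x - y‖ ^ (-α) * (⟪y⟫ ^ t * ⟪y⟫ ^ (-b)) +
          (‖x - y‖ ^ t * ‖x - y‖ ^ (-α)) * ⟪y⟫ ^ (-b)) := by ring
    _ ≤ _ := by rw [hy]; gcongr

end Inequalities

section RadialKernels

variable {E : Type*} [NormedAddCommGroup E] [MeasurableSpace E] {μ : Measure E}
  [NullSingletonClass μ] {f g : ℝ → ℝ}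

lemma ae_norm_sub_mul_norm_le (hf : AntitoneOn f (Ioi 0)) (hg : AntitoneOn g (Ioi 0))
    (hf₀ : ∀ r ∈ Ioi 0, 0 ≤ f r) (hg₀ : ∀ r ∈ Ioi 0, 0 ≤ g r) (x : E) :
    ∀ᵐ y ∂μ, 0 ≤ f ‖x - y‖ * g ‖y‖ ∧
      f ‖x - y‖ * g ‖y‖ ≤ f ‖x - y‖ * g ‖x - y‖ + f ‖y‖ * g ‖y‖ := by
  filter_upwards [Measure.ae_ne μ 0, Measure.ae_ne μ x] with y hy₀ hyx
  have hy : ‖y‖ ∈ Ioi 0 := norm_pos_iff.2 hy₀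
  have hxy : ‖x - y‖ ∈ Ioi 0 := norm_pos_iff.2 (sub_ne_zero.2 hyx.symm)
  exact ⟨mul_nonneg (hf₀ _ hxy) (hg₀ _ hy), mul_le_mul_add_mul_of_antitoneOn hf hg hf₀ hg₀ hxy hy⟩

variable [BorelSpace E] [μ.IsAddLeftInvariant] [μ.IsNegInvariant]

lemma integrable_norm_sub_mul_norm (hf : AntitoneOn f (Ioi 0)) (hg : AntitoneOn g (Ioi 0))
    (hf₀ : ∀ r ∈ Ioi 0, 0 ≤ f r) (hg₀ : ∀ r ∈ Ioi 0, 0 ≤ g r) (hfm : Measurable f)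
    (hgm : Measurable g) (hfg : Integrable (fun z : E => f ‖z‖ * g ‖z‖) μ) (x : E) :
    Integrable (fun y => f ‖x - y‖ * g ‖y‖) μ := by
  refine ((hfg.comp_sub_left x).add hfg).mono' (Measurable.aestronglyMeasurable ?_) ?_
  · exact (hfm.comp (by fun_prop)).mul (hgm.comp measurable_norm)
  · filter_upwards [ae_norm_sub_mul_norm_le hf hg hf₀ hg₀ x] with y ⟨hnonneg, hle⟩
    rwa [Real.norm_of_nonneg hnonneg]

lemma integral_norm_sub_mul_norm_le (hf : AntitoneOn f (Ioi 0)) (hg : AntitoneOn g (Ioi 0))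
    (hf₀ : ∀ r ∈ Ioi 0, 0 ≤ f r) (hg₀ : ∀ r ∈ Ioi 0, 0 ≤ g r)
    (hfg : Integrable (fun z : E => f ‖z‖ * g ‖z‖) μ) (x : E) :
    ∫ y, f ‖x - y‖ * g ‖y‖ ∂μ ≤ 2 * ∫ z, f ‖z‖ * g ‖z‖ ∂μ := by
  have hdom := ae_norm_sub_mul_norm_le (μ := μ) hf hg hf₀ hg₀ x
  calc ∫ y, f ‖x - y‖ * g ‖y‖ ∂μ
      ≤ ∫ y, (f ‖x - y‖ * g ‖x - y‖ + f ‖y‖ * g ‖y‖) ∂μ :=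
        integral_mono_of_nonneg (hdom.mono fun _ h => h.1) ((hfg.comp_sub_left x).add hfg)
          (hdom.mono fun _ h => h.2)
    _ = 2 * ∫ z, f ‖z‖ * g ‖z‖ ∂μ := by
        rw [integral_add (hfg.comp_sub_left x) hfg,
          integral_sub_left_eq_self (fun z => f ‖z‖ * g ‖z‖) μ x, two_mul]

end RadialKernels

section BracketWeights

lemma antitoneOn_bracket_rpow_neg {b : ℝ} (hb : 0 ≤ b) :
    AntitoneOn (fun r : ℝ => √(1 + r ^ 2) ^ (-b)) (Ioi 0) := fun r (hr : 0 < r) s _ hrs =>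
  Real.rpow_le_rpow_of_nonpos (by positivity) (by gcongr) (neg_nonpos.2 hb)

variable {E : Type*} [NormedAddCommGroup E] [NormedSpace ℝ E] [FiniteDimensional ℝ E]
  [MeasurableSpace E] [BorelSpace E] {μ : Measure E} [μ.IsAddHaarMeasure]

lemma integrableOn_compl_ball_norm_rpow_neg {r : ℝ} (hr : finrank ℝ E < r) :
    IntegrableOn (fun z : E => ‖z‖ ^ (-r)) (Metric.ball 0 1)ᶜ μ := by
  have hr₀ : 0 < r := (Nat.cast_nonneg _).trans_lt hr
  refine ((integrable_one_add_norm hr).const_mul (2 ^ r)).integrableOn.mono'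
    (Measurable.aestronglyMeasurable (by fun_prop)) ?_
  filter_upwards [ae_restrict_mem Metric.isOpen_ball.measurableSet.compl] with z hz
  have hz₁ : 1 ≤ ‖z‖ := by simpa using hz
  calc ‖‖z‖ ^ (-r)‖ = ‖z‖ ^ (-r) := Real.norm_of_nonneg (by positivity)
    _ ≤ ((1 + ‖z‖) / 2) ^ (-r) :=
        Real.rpow_le_rpow_of_nonpos (by positivity) (by linarith) (neg_nonpos.2 hr₀.le)
    _ = 2 ^ r * (1 + ‖z‖) ^ (-r) := by
        rw [Real.div_rpow (by positivity) zero_le_two, Real.rpow_neg zero_le_two, div_inv_eq_mul,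
          mul_comm]

variable [Nontrivial E]

lemma integrable_norm_rpow_neg_mul_bracket_rpow_neg {a b : ℝ} (hb : 0 ≤ b)
    (ha : a < finrank ℝ E) (hab : finrank ℝ E < a + b) :
    Integrable (fun z : E => ‖z‖ ^ (-a) * ⟪z⟫ ^ (-b)) μ := by
  have hmeas : Measurable fun z : E => ‖z‖ ^ (-a) * ⟪z⟫ ^ (-b) := by fun_prop
  have hnear : IntegrableOn (fun z : E => ‖z‖ ^ (-a) * ⟪z⟫ ^ (-b)) (Metric.ball 0 1) μ := by
    refine integrableOn_ball_of_norm_le_rpow (C := 1) finrank_pos ha (ae_of_all _ fun z => ?_)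
      hmeas.aestronglyMeasurable
    rw [Real.norm_of_nonneg (by positivity), mul_comm]
    gcongr
    exact Real.rpow_le_one_of_one_le_of_nonpos (Real.one_le_sqrt.2 (by simp)) (neg_nonpos.2 hb)
  have hfar : IntegrableOn (fun z : E => ‖z‖ ^ (-a) * ⟪z⟫ ^ (-b)) (Metric.ball 0 1)ᶜ μ := by
    refine (integrableOn_compl_ball_norm_rpow_neg hab).mono' hmeas.aestronglyMeasurable ?_
    filter_upwards [ae_restrict_mem Metric.isOpen_ball.measurableSet.compl] with z hz
    have hz₀ : 0 < ‖z‖ := one_pos.trans_le (by simpa using hz)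
    rw [Real.norm_of_nonneg (by positivity), neg_add, Real.rpow_add hz₀]
    gcongr ?_ * ?_
    exact Real.rpow_le_rpow_of_nonpos hz₀ (Real.le_sqrt_of_sq_le (by simp)) (neg_nonpos.2 hb)
  exact integrableOn_univ.1 (union_compl_self (Metric.ball (0 : E) 1) ▸ hnear.union hfar)

lemma integrable_norm_sub_rpow_neg_mul_bracket_rpow_neg {a b : ℝ} (ha₀ : 0 ≤ a) (hb : 0 ≤ b)
    (ha : a < finrank ℝ E) (hab : finrank ℝ E < a + b) (x : E) :
    Integrable (fun y => ‖x - y‖ ^ (-a) * ⟪y⟫ ^ (-b)) μ :=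
  integrable_norm_sub_mul_norm (Real.antitoneOn_rpow_Ioi_of_exponent_nonpos (neg_nonpos.2 ha₀))
    (antitoneOn_bracket_rpow_neg hb) (fun _ hr => Real.rpow_nonneg (le_of_lt hr) _)
    (fun _ _ => by positivity) (by fun_prop) (by fun_prop)
    (integrable_norm_rpow_neg_mul_bracket_rpow_neg hb ha hab) x

lemma integral_norm_sub_rpow_neg_mul_bracket_rpow_neg_le {a b : ℝ} (ha₀ : 0 ≤ a) (hb : 0 ≤ b)
    (ha : a < finrank ℝ E) (hab : finrank ℝ E < a + b) (x : E) :
    ∫ y, ‖x - y‖ ^ (-a) * ⟪y⟫ ^ (-b) ∂μ ≤ 2 * ∫ z : E, ‖z‖ ^ (-a) * ⟪z⟫ ^ (-b) ∂μ :=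
  integral_norm_sub_mul_norm_le (Real.antitoneOn_rpow_Ioi_of_exponent_nonpos (neg_nonpos.2 ha₀))
    (antitoneOn_bracket_rpow_neg hb) (fun _ hr => Real.rpow_nonneg (le_of_lt hr) _)
    (fun _ _ => by positivity) (integrable_norm_rpow_neg_mul_bracket_rpow_neg hb ha hab) x

lemma exists_integral_norm_sub_rpow_neg_mul_bracket_rpow_neg_le {α b t : ℝ} (ht : 0 ≤ t)
    (htα : t ≤ α) (hα : α < finrank ℝ E) (hαb : finrank ℝ E < α + b - t) :
    ∃ K > 0, ∀ x : E, ∫ y, ‖x - y‖ ^ (-α) * ⟪y⟫ ^ (-b) ∂μ ≤ K * ⟪x⟫ ^ (-t) := by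
  set I : ℝ → ℝ → E → ℝ := fun a b x => ∫ y, ‖x - y‖ ^ (-a) * ⟪y⟫ ^ (-b) ∂μ
  set J : ℝ → ℝ → ℝ := fun a b => ∫ z : E, ‖z‖ ^ (-a) * ⟪z⟫ ^ (-b) ∂μ
  have hα₀ : 0 ≤ α := ht.trans htα
  have hint := integrable_norm_sub_rpow_neg_mul_bracket_rpow_neg (μ := μ) hα₀
    (by linarith) hα (show finrank ℝ E < α + b by linarith)
  have hint₁ := integrable_norm_sub_rpow_neg_mul_bracket_rpow_neg (μ := μ) hα₀
    (by linarith) hα (show finrank ℝ E < α + (b - t) by linarith)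
  have hint₂ := integrable_norm_sub_rpow_neg_mul_bracket_rpow_neg (μ := μ) (sub_nonneg.2 htα)
    (by linarith) (by linarith) (show finrank ℝ E < (α - t) + b by linarith)
  refine ⟨2 ^ t * (2 * J α (b - t) + 2 * J (α - t) b) + 1, by positivity, fun x => ?_⟩
  rw [Real.rpow_neg (by positivity), ← div_eq_mul_inv, le_div_iff₀' (by positivity)]
  calc ⟪x⟫ ^ t * I α b x
      ≤ ∫ y, 2 ^ t * (‖x - y‖ ^ (-α) * ⟪y⟫ ^ (-(b - t)) +
          ‖x - y‖ ^ (-(α - t)) * ⟪y⟫ ^ (-b)) ∂μ := by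
        rw [← integral_const_mul]
        exact integral_mono ((hint x).const_mul _) (((hint₁ x).add (hint₂ x)).const_mul _)
          (bracket_rpow_mul_norm_sub_rpow_mul_le ht x)
    _ = 2 ^ t * (I α (b - t) x + I (α - t) b x) := by
        rw [integral_const_mul, integral_add (hint₁ x) (hint₂ x)]
    _ ≤ 2 ^ t * (2 * J α (b - t) + 2 * J (α - t) b) := by
        gcongr <;> apply integral_norm_sub_rpow_neg_mul_bracket_rpow_neg_le <;> linarith
    _ ≤ _ := le_add_of_nonneg_right zero_le_one

end BracketWeights

lemma Icc_induction_of_lt_add {P : ℝ → Prop} {a b ε : ℝ} (hab : a ≤ b) (hε : 0 < ε) (ha : P a)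
    (step : ∀ s ∈ Icc a b, ∀ t ∈ Icc a b, t < s + ε → P s → P t) : P b := by
  have hiff : P a ↔ P b := by
    refine isPreconnected_Icc.induction₂ (fun s t => P s ↔ P t) (fun s hs => ?_)
      (fun _ _ _ _ _ _ => Iff.trans) (fun _ _ _ _ => Iff.symm) (left_mem_Icc.2 hab)
      (right_mem_Icc.2 hab)
    filter_upwards [mem_nhdsWithin_of_mem_nhds (Ioo_mem_nhds (sub_lt_self s hε)
      (lt_add_of_pos_right s hε)), self_mem_nhdsWithin] with t ht ht'
    exact ⟨step s hs t ht' ht.2, step t ht' s hs (sub_lt_iff_lt_add.1 ht.1)⟩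
  exact hiff.1 ha

section Bootstrap

variable {E F : Type*} [NormedAddCommGroup E] [MeasurableSpace E] [NormedAddCommGroup F]

/-- The functions of the family `S` are `O(⟨x⟩ ^ (-s))` almost everywhere, with one constant for the
whole family. -/
def HasUniformDecay (μ : Measure E) (S : Set (E → F)) (s : ℝ) : Prop :=
  ∃ C > 0, ∀ φ ∈ S, ∀ᵐ x ∂μ, ‖φ x‖ ≤ C * ⟪x⟫ ^ (-s)

variable [NormedSpace ℝ E] [FiniteDimensional ℝ E] [Nontrivial E] [BorelSpace E] {μ : Measure E}
  [μ.IsAddHaarMeasure] {S : Set (E → F)} {α γ δ C₂ : ℝ}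

lemma HasUniformDecay.improve_of_norm_le_integral {s t : ℝ} (hα : α < finrank ℝ E) (hC₂ : 0 < C₂)
    (hS : ∀ φ ∈ S, ∀ᵐ x ∂μ,
      ‖φ x‖ ≤ C₂ * ⟪x⟫ ^ (-γ) * ∫ y, ‖x - y‖ ^ (-α) * ⟪y⟫ ^ (-δ) * ‖φ y‖ ∂μ)
    (hs : HasUniformDecay μ S s) (ht : t ∈ Icc γ (α + γ))
    (hts : t < s + (α + γ + δ - finrank ℝ E)) : HasUniformDecay μ S t := by
  obtain ⟨C, hC, hdecay⟩ := hs
  obtain ⟨hγt, htα⟩ := ht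
  obtain ⟨K, hK, hKx⟩ := exists_integral_norm_sub_rpow_neg_mul_bracket_rpow_neg_le (μ := μ)
    (b := δ + s) (sub_nonneg.2 hγt) (by linarith) hα (by linarith)
  refine ⟨C₂ * (C * K), by positivity, fun φ hφ => ?_⟩
  filter_upwards [hS φ hφ] with x hx
  have hint : Integrable (fun y => ‖x - y‖ ^ (-α) * ⟪y⟫ ^ (-(δ + s))) μ :=
    integrable_norm_sub_rpow_neg_mul_bracket_rpow_neg (by linarith) (by linarith) hα
      (by linarith) x
  have hpotential : ∫ y, ‖x - y‖ ^ (-α) * ⟪y⟫ ^ (-δ) * ‖φ y‖ ∂μ ≤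
      C * ∫ y, ‖x - y‖ ^ (-α) * ⟪y⟫ ^ (-(δ + s)) ∂μ := by
    rw [← integral_const_mul]
    refine integral_mono_of_nonneg (ae_of_all _ fun y => by positivity) (hint.const_mul C) ?_
    filter_upwards [hdecay φ hφ] with y hy
    calc ‖x - y‖ ^ (-α) * ⟪y⟫ ^ (-δ) * ‖φ y‖
        ≤ ‖x - y‖ ^ (-α) * ⟪y⟫ ^ (-δ) * (C * ⟪y⟫ ^ (-s)) := by gcongr
      _ = C * (‖x - y‖ ^ (-α) * ⟪y⟫ ^ (-(δ + s))) := by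
          rw [neg_add, Real.rpow_add (by positivity)]
          ring
  calc ‖φ x‖ ≤ C₂ * ⟪x⟫ ^ (-γ) * ∫ y, ‖x - y‖ ^ (-α) * ⟪y⟫ ^ (-δ) * ‖φ y‖ ∂μ := hx
    _ ≤ C₂ * ⟪x⟫ ^ (-γ) * (C * (K * ⟪x⟫ ^ (-(t - γ)))) := by
        gcongr
        exact hpotential.trans (by gcongr; exact hKx x)
    _ = C₂ * (C * K) * (⟪x⟫ ^ (-γ) * ⟪x⟫ ^ (-(t - γ))) := by ring
    _ = C₂ * (C * K) * ⟪x⟫ ^ (-t) := by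
        rw [← Real.rpow_add (by positivity), neg_sub, neg_add_eq_sub, sub_sub_cancel_left]

end Bootstrap

theorem stmt_0_general {E F : Type*} [NormedAddCommGroup E] [NormedSpace ℝ E]
    [FiniteDimensional ℝ E] [MeasurableSpace E] [BorelSpace E] [NormedAddCommGroup F]
    (μ : Measure E) [μ.IsAddHaarMeasure] {α γ δ C₁ C₂ : ℝ} (hα₀ : 0 ≤ α)
    (hα : α < finrank ℝ E) (hγδ : finrank ℝ E < α + γ + δ) (hC₁ : 0 < C₁) (hC₂ : 0 < C₂) :
    ∃ C > 0, ∀ φ : E → F, AEStronglyMeasurable φ μ →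
      (∀ᵐ x ∂μ, ‖φ x‖ ≤ C₁ * ⟪x⟫ ^ (-γ)) →
      (∀ᵐ x ∂μ, ‖φ x‖ ≤ C₂ * ⟪x⟫ ^ (-γ) * ∫ y, ‖x - y‖ ^ (-α) * ⟪y⟫ ^ (-δ) * ‖φ y‖ ∂μ) →
      ∀ᵐ x ∂μ, ‖φ x‖ ≤ C * ⟪x⟫ ^ (-(α + γ)) := by
  have : Nontrivial E := nontrivial_of_finrank_pos (R := ℝ) (by exact_mod_cast hα₀.trans_lt hα)
  let S : Set (E → F) := {φ | (∀ᵐ x ∂μ, ‖φ x‖ ≤ C₁ * ⟪x⟫ ^ (-γ)) ∧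
    ∀ᵐ x ∂μ, ‖φ x‖ ≤ C₂ * ⟪x⟫ ^ (-γ) * ∫ y, ‖x - y‖ ^ (-α) * ⟪y⟫ ^ (-δ) * ‖φ y‖ ∂μ}
  have hγ : HasUniformDecay μ S γ := ⟨C₁, hC₁, fun φ hφ => hφ.1⟩
  obtain ⟨C, hC, hdecay⟩ : HasUniformDecay μ S (α + γ) :=
    Icc_induction_of_lt_add (le_add_of_nonneg_left hα₀) (sub_pos.2 hγδ) hγ
      fun _ _ _ ht hts hs => hs.improve_of_norm_le_integral hα hC₂ (fun φ hφ => hφ.2) ht hts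
  exact ⟨C, hC, fun φ _ hbound hineq => hdecay φ ⟨hbound, hineq⟩⟩

/-- Decay estimate for threshold eigenfunctions: if `φ` satisfies the pointwise bound
`|φ(x)| ≤ C₁⟨x⟩^{-β/2}` and the integral inequality
`|φ(x)| ≤ C₂⟨x⟩^{-β/2} ∫ |x−y|^{2m−n}⟨y⟩^{-β/2}|φ(y)| dy`, then
`|φ(x)| ≤ C⟨x⟩^{2m−n−β/2}` a.e. -/
theorem stmt_0 (n m : ℕ) (hm : 1 ≤ m) (hn : 2 * m < n) (β : ℝ) (hβ : 2 * (m : ℝ) < β)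
    (C₁ C₂ : ℝ) (hC₁ : 0 < C₁) (hC₂ : 0 < C₂) :
    ∃ C > (0 : ℝ), ∀ φ : EuclideanSpace ℝ (Fin n) → ℂ, Measurable φ →
      (∀ᵐ x ∂(volume : Measure (EuclideanSpace ℝ (Fin n))),
        ‖φ x‖ ≤ C₁ * Real.sqrt (1 + ‖x‖ ^ 2) ^ (-β / 2)) →
      (∀ᵐ x ∂(volume : Measure (EuclideanSpace ℝ (Fin n))),
        ‖φ x‖ ≤ C₂ * Real.sqrt (1 + ‖x‖ ^ 2) ^ (-β / 2) *
          ∫ y, ‖x - y‖ ^ (2 * (m : ℝ) - n) * Real.sqrt (1 + ‖y‖ ^ 2) ^ (-β / 2) * ‖φ y‖) →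
      ∀ᵐ x ∂(volume : Measure (EuclideanSpace ℝ (Fin n))),
        ‖φ x‖ ≤ C * Real.sqrt (1 + ‖x‖ ^ 2) ^ (2 * (m : ℝ) - n - β / 2) := by
  have hm' : (1 : ℝ) ≤ m := by exact_mod_cast hm
  have hn' : 2 * (m : ℝ) < n := by exact_mod_cast hn
  have hdim : finrank ℝ (EuclideanSpace ℝ (Fin n)) = n := finrank_euclideanSpace_fin
  obtain ⟨C, hC, hdecay⟩ := stmt_0_general (F := ℂ) (volume : Measure (EuclideanSpace ℝ (Fin n)))
    (α := n - 2 * m) (γ := β / 2) (δ := β / 2) (by linarith) (by rw [hdim]; linarith)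
    (by rw [hdim]; linarith) hC₁ hC₂
  simp only [neg_add', neg_sub, ← neg_div] at hdecay
  exact ⟨C, hC, fun φ hφ => hdecay φ hφ.aestronglyMeasurable⟩
end

section
/- Let n > 2m ≥ 2 be integers and let γ be a real number with 2m < γ < n. Then there is a constant C (depending on n, m, γ) such that for every x ∈ ℝⁿ, ∫_{ℝⁿ} ⟨y⟩^{-γ} |x−y|^{2m−n} dy ≤ C ⟨x⟩^{2m−γ}. -/
/-!
Let `d = dim E`, `s = 2m` and `R = ⟨x⟩`. Since `⟨·⟩` is 1-Lipschitz, `R ≤ ⟨y⟩ + ‖x - y‖`, so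
the larger of `⟨y⟩` and `‖x - y‖` is at least `R / 2`.

* If `‖x - y‖ ≤ ⟨y⟩`, then `R + ‖x - y‖ ≤ 3 ⟨y⟩`.
* If `⟨y⟩ ≤ ‖x - y‖`, then `R + ‖y‖ ≤ 3 ‖x - y‖`, while `⟨y⟩ ≥ ‖y‖`.

Hence, up to constants, the integrand is at most
`‖x - y‖ ^ (s - d) (R + ‖x - y‖) ^ (-γ) + ‖y‖ ^ (-γ) (R + ‖y‖) ^ (s - d)`. Both summands are
integrable, as `s - d, -γ > -d` near the origin and `s - d - γ < -d` at infinity. Both are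
homogeneous of degree `s - d - γ` in the variable and `R` jointly, so their integrals are constant
multiples of `R ^ (s - γ)`.
-/

open MeasureTheory Module Set

lemma integrableOn_Ioi_zero_rpow_mul_one_add_rpow {p q : ℝ} (hp : -1 < p) (hpq : p + q < -1) :
    IntegrableOn (fun t : ℝ => t ^ p * (1 + t) ^ q) (Ioi 0) := by
  have hmeas : Measurable fun t : ℝ => t ^ p * (1 + t) ^ q := by fun_prop
  have near_zero : IntegrableOn (fun t : ℝ => t ^ p * (1 + t) ^ q) (Ioc 0 1) := by
    have hpow : IntegrableOn (fun t : ℝ => t ^ p) (Ioc 0 1) :=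
      (intervalIntegrable_iff_integrableOn_Ioc_of_le zero_le_one).1
        (intervalIntegral.intervalIntegrable_rpow' hp)
    refine hpow.mono' hmeas.aestronglyMeasurable ?_
    filter_upwards [ae_restrict_mem measurableSet_Ioc] with t ⟨ht, _⟩
    rw [Real.norm_of_nonneg (by positivity)]
    exact mul_le_of_le_one_right (by positivity)
      (Real.rpow_le_one_of_one_le_of_nonpos (by linarith) (by linarith))
  have near_infinity : IntegrableOn (fun t : ℝ => t ^ p * (1 + t) ^ q) (Ioi 1) := by
    refine (integrableOn_Ioi_rpow_of_lt hpq one_pos).mono' hmeas.aestronglyMeasurable ?_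
    filter_upwards [ae_restrict_mem measurableSet_Ioi] with t ht
    have ht0 : 0 < t := one_pos.trans ht
    rw [Real.norm_of_nonneg (by positivity), Real.rpow_add ht0]
    exact mul_le_mul_of_nonneg_left
      (Real.rpow_le_rpow_of_nonpos ht0 (by linarith) (by linarith)) (by positivity)
  simpa only [Ioc_union_Ioi_eq_Ioi zero_le_one] using near_zero.union near_infinity

section RadialWeight

variable {E : Type*} [NormedAddCommGroup E]

/-- The radial weight `‖u‖ ^ p (R + ‖u‖) ^ q`: it behaves like the power `p` of the norm near the
origin and like the power `p + q` at infinity, with the transition at scale `R`. -/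
noncomputable def radialWeight (p q R : ℝ) (u : E) : ℝ :=
  ‖u‖ ^ p * (R + ‖u‖) ^ q

lemma radialWeight_nonneg (p q : ℝ) {R : ℝ} (hR : 0 ≤ R) (u : E) : 0 ≤ radialWeight p q R u := by
  unfold radialWeight
  positivity

variable [NormedSpace ℝ E]

lemma radialWeight_eq_rpow_mul_radialWeight_one (p q : ℝ) {R : ℝ} (hR : 0 < R) (u : E) :
    radialWeight p q R u = R ^ (p + q) * radialWeight p q 1 (R⁻¹ • u) := by
  have hnorm : ‖u‖ = R * ‖R⁻¹ • u‖ := by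
    rw [norm_smul_of_nonneg (by positivity), mul_inv_cancel_left₀ hR.ne']
  have hadd : R + ‖u‖ = R * (1 + ‖R⁻¹ • u‖) := by rw [mul_add, mul_one, ← hnorm]
  unfold radialWeight
  rw [hadd, hnorm, Real.mul_rpow hR.le (by positivity), Real.mul_rpow hR.le (by positivity),
    Real.rpow_add hR]
  ring

variable [FiniteDimensional ℝ E] [MeasurableSpace E] [BorelSpace E] (μ : Measure E)
  [μ.IsAddHaarMeasure]

lemma integral_radialWeight (p q : ℝ) {R : ℝ} (hR : 0 < R) :
    ∫ u : E, radialWeight p q R u ∂μ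
      = R ^ (finrank ℝ E + p + q) * ∫ u : E, radialWeight p q 1 u ∂μ := by
  simp only [radialWeight_eq_rpow_mul_radialWeight_one p q hR]
  rw [integral_const_mul, Measure.integral_comp_inv_smul_of_nonneg _ _ hR.le, smul_eq_mul,
    ← mul_assoc, ← Real.rpow_natCast, ← Real.rpow_add hR]
  ring_nf

variable [Nontrivial E]

lemma integrable_radialWeight_one {p q : ℝ} (hp : -(finrank ℝ E : ℝ) < p)
    (hpq : p + q < -(finrank ℝ E : ℝ)) : Integrable (radialWeight p q 1 : E → ℝ) μ := by
  refine (integrable_fun_norm_addHaar μ (f := fun t : ℝ => t ^ p * (1 + t) ^ q)).2 ?_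
  have polar : IntegrableOn
      (fun t : ℝ => t ^ ((finrank ℝ E : ℝ) - 1 + p) * (1 + t) ^ q) (Ioi 0) :=
    integrableOn_Ioi_zero_rpow_mul_one_add_rpow (by linarith) (by linarith)
  refine polar.congr_fun (fun t (ht : 0 < t) => ?_) measurableSet_Ioi
  dsimp only
  rw [smul_eq_mul, ← mul_assoc, Real.rpow_add ht, ← Nat.cast_pred finrank_pos, Real.rpow_natCast]

lemma integrable_radialWeight {p q R : ℝ} (hp : -(finrank ℝ E : ℝ) < p)
    (hpq : p + q < -(finrank ℝ E : ℝ)) (hR : 0 < R) :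
    Integrable (radialWeight p q R : E → ℝ) μ := by
  rw [funext (radialWeight_eq_rpow_mul_radialWeight_one p q hR)]
  exact ((integrable_radialWeight_one μ hp hpq).comp_smul (inv_ne_zero hR.ne')).const_mul _

end RadialWeight

section RieszMajorant

variable {E : Type*} [NormedAddCommGroup E]

/-- The majorant of `y ↦ ⟨y⟩ ^ (-γ) ‖x - y‖ ^ (-b)`, where `R` stands for `⟨x⟩`. The first summand
controls the region `‖x - y‖ ≤ ⟨y⟩`, the second one its complement. -/
noncomputable def rieszMajorant (γ b R : ℝ) (x y : E) : ℝ :=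
  3 ^ γ * radialWeight (-b) (-γ) R (x - y) + 3 ^ b * radialWeight (-γ) (-b) R y

variable [NormedSpace ℝ E] [FiniteDimensional ℝ E] [Nontrivial E] [MeasurableSpace E]
  [BorelSpace E] (μ : Measure E) [μ.IsAddHaarMeasure] {γ b R : ℝ}

lemma integrable_rieszMajorant (hγ : γ < finrank ℝ E) (hb : b < finrank ℝ E)
    (hγb : finrank ℝ E < γ + b) (hR : 0 < R) (x : E) : Integrable (rieszMajorant γ b R x) μ :=
  (((integrable_radialWeight μ (by linarith) (by linarith) hR).comp_sub_left x).const_mul _).add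
    ((integrable_radialWeight μ (by linarith) (by linarith) hR).const_mul _)

lemma integral_rieszMajorant (hγ : γ < finrank ℝ E) (hb : b < finrank ℝ E)
    (hγb : finrank ℝ E < γ + b) (hR : 0 < R) (x : E) :
    ∫ y, rieszMajorant γ b R x y ∂μ
      = (3 ^ γ * ∫ u : E, radialWeight (-b) (-γ) 1 u ∂μ
          + 3 ^ b * ∫ u : E, radialWeight (-γ) (-b) 1 u ∂μ) * R ^ (finrank ℝ E - b - γ) := by
  have near : Integrable (fun y => radialWeight (-b) (-γ) R (x - y)) μ :=
    (integrable_radialWeight μ (by linarith) (by linarith) hR).comp_sub_left x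
  have far : Integrable (radialWeight (-γ) (-b) R : E → ℝ) μ :=
    integrable_radialWeight μ (by linarith) (by linarith) hR
  unfold rieszMajorant
  rw [integral_add (near.const_mul _) (far.const_mul _), integral_const_mul, integral_const_mul,
    integral_sub_left_eq_self (radialWeight (-b) (-γ) R) μ x, integral_radialWeight μ _ _ hR,
    integral_radialWeight μ _ _ hR]
  ring_nf

end RieszMajorant

lemma rpow_neg_le_mul_rpow_neg {u v c r : ℝ} (hv : 0 < v) (hc : 0 < c) (hr : 0 ≤ r)
    (h : v ≤ c * u) : u ^ (-r) ≤ c ^ r * v ^ (-r) :=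
  calc u ^ (-r) ≤ (c⁻¹ * v) ^ (-r) :=
        Real.rpow_le_rpow_of_nonpos (by positivity) ((inv_mul_le_iff₀ hc).2 h) (by linarith)
    _ = c ^ r * v ^ (-r) := by
        rw [Real.mul_rpow (by positivity) hv.le, Real.inv_rpow hc.le, Real.rpow_neg hc.le, inv_inv]

section Bracket

variable {E : Type*}

lemma norm_le_sqrt_one_add_norm_sq [SeminormedAddCommGroup E] (x : E) : ‖x‖ ≤ √(1 + ‖x‖ ^ 2) :=
  Real.le_sqrt_of_sq_le (by linarith)

-- `√(1 + ‖x‖ ^ 2)` is the norm of `(1, x)` in the Hilbert sum `ℝ ⊕ E`.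
lemma sqrt_one_add_norm_sq_le_add_norm_sub [SeminormedAddCommGroup E] (x y : E) :
    √(1 + ‖x‖ ^ 2) ≤ √(1 + ‖y‖ ^ 2) + ‖x - y‖ := by
  simpa [WithLp.prod_norm_eq_of_L2] using
    norm_add_le (WithLp.toLp 2 ((1 : ℝ), y)) (WithLp.toLp 2 ((0 : ℝ), x - y))

lemma bracket_rpow_neg_mul_norm_sub_rpow_neg_le_rieszMajorant [NormedAddCommGroup E] {γ b : ℝ}
    (hγ : 0 ≤ γ) (hb : 0 ≤ b) (x : E) {y : E} (hy : y ≠ 0) :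
    √(1 + ‖y‖ ^ 2) ^ (-γ) * ‖x - y‖ ^ (-b)
      ≤ rieszMajorant γ b √(1 + ‖x‖ ^ 2) x y := by
  have hy0 : 0 < ‖y‖ := norm_pos_iff.2 hy
  have triangle := sqrt_one_add_norm_sq_le_add_norm_sub x y
  have norm_le := norm_le_sqrt_one_add_norm_sq y
  have hR : 0 < √(1 + ‖x‖ ^ 2) := by positivity
  generalize √(1 + ‖x‖ ^ 2) = R at *
  generalize √(1 + ‖y‖ ^ 2) = J at *
  have near_nonneg := radialWeight_nonneg (-b) (-γ) hR.le (x - y)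
  have far_nonneg := radialWeight_nonneg (-γ) (-b) hR.le y
  rcases le_total ‖x - y‖ J with near | far
  · have hJ : J ^ (-γ) ≤ 3 ^ γ * (R + ‖x - y‖) ^ (-γ) :=
      rpow_neg_le_mul_rpow_neg (by positivity) three_pos hγ (by linarith)
    calc J ^ (-γ) * ‖x - y‖ ^ (-b)
        ≤ 3 ^ γ * (R + ‖x - y‖) ^ (-γ) * ‖x - y‖ ^ (-b) := by gcongr
      _ = 3 ^ γ * radialWeight (-b) (-γ) R (x - y) := by unfold radialWeight; ring
      _ ≤ _ := le_add_of_nonneg_right (by positivity)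
  · have hJ : J ^ (-γ) ≤ ‖y‖ ^ (-γ) := Real.rpow_le_rpow_of_nonpos hy0 norm_le (by linarith)
    have hd : ‖x - y‖ ^ (-b) ≤ 3 ^ b * (R + ‖y‖) ^ (-b) :=
      rpow_neg_le_mul_rpow_neg (by positivity) three_pos hb (by linarith)
    calc J ^ (-γ) * ‖x - y‖ ^ (-b)
        ≤ ‖y‖ ^ (-γ) * (3 ^ b * (R + ‖y‖) ^ (-b)) := by gcongr
      _ = 3 ^ b * radialWeight (-γ) (-b) R y := by unfold radialWeight; ring
      _ ≤ _ := le_add_of_nonneg_left (by positivity)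

end Bracket

theorem stmt_1_general {E : Type*} [NormedAddCommGroup E] [NormedSpace ℝ E]
    [FiniteDimensional ℝ E] [MeasurableSpace E] [BorelSpace E] (μ : Measure E)
    [μ.IsAddHaarMeasure] {s γ : ℝ} (hs : 0 < s) (hsγ : s < γ) (hγ : γ < finrank ℝ E) :
    ∃ C > (0 : ℝ), ∀ x : E,
      Integrable (fun y => √(1 + ‖y‖ ^ 2) ^ (-γ) * ‖x - y‖ ^ (s - finrank ℝ E)) μ ∧
        ∫ y, √(1 + ‖y‖ ^ 2) ^ (-γ) * ‖x - y‖ ^ (s - finrank ℝ E) ∂μ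
          ≤ C * √(1 + ‖x‖ ^ 2) ^ (s - γ) := by
  have : Nontrivial E := finrank_pos_iff.1 (Nat.cast_pos.1 (by linarith : (0 : ℝ) < finrank ℝ E))
  obtain ⟨b, hb⟩ : ∃ b : ℝ, b = finrank ℝ E - s := ⟨_, rfl⟩
  have hkernel : s - finrank ℝ E = -b := by linarith
  have hdecay : s - γ = finrank ℝ E - b - γ := by linarith
  set K := 3 ^ γ * ∫ u : E, radialWeight (-b) (-γ) 1 u ∂μ
    + 3 ^ b * ∫ u : E, radialWeight (-γ) (-b) 1 u ∂μ with hK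
  have hK_nonneg : 0 ≤ K := by
    have integral_radialWeight_nonneg (p q : ℝ) : 0 ≤ ∫ u : E, radialWeight p q 1 u ∂μ :=
      integral_nonneg (radialWeight_nonneg p q zero_le_one)
    have := integral_radialWeight_nonneg (-b) (-γ)
    have := integral_radialWeight_nonneg (-γ) (-b)
    positivity
  refine ⟨K + 1, by positivity, fun x => ?_⟩
  rw [hkernel, hdecay]
  have hR : 0 < √(1 + ‖x‖ ^ 2) := by positivity
  have hmajorant : Integrable (rieszMajorant γ b √(1 + ‖x‖ ^ 2) x) μ :=
    integrable_rieszMajorant μ hγ (by linarith) (by linarith) hR x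
  have hle : ∀ᵐ y ∂μ, √(1 + ‖y‖ ^ 2) ^ (-γ) * ‖x - y‖ ^ (-b)
      ≤ rieszMajorant γ b √(1 + ‖x‖ ^ 2) x y := by
    -- `y = 0` is excluded because `‖0‖ ^ (-γ) = 0` in the majorant.
    filter_upwards [Measure.ae_ne μ 0] with y hy
    exact bracket_rpow_neg_mul_norm_sub_rpow_neg_le_rieszMajorant (by linarith) (by linarith) x hy
  have hint : Integrable (fun y => √(1 + ‖y‖ ^ 2) ^ (-γ) * ‖x - y‖ ^ (-b)) μ := by
    refine hmajorant.mono' (by fun_prop) ?_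
    filter_upwards [hle] with y hy
    rwa [Real.norm_of_nonneg (by positivity)]
  refine ⟨hint, (integral_mono_ae hint hmajorant hle).trans ?_⟩
  rw [integral_rieszMajorant μ hγ (by linarith) (by linarith) hR x, ← hK]
  gcongr
  exact le_add_of_nonneg_right zero_le_one

/-- For `2m < γ < n`, `∫ ⟨y⟩^{-γ} |x−y|^{2m−n} dy ≤ C ⟨x⟩^{2m−γ}`. -/
theorem stmt_1 (n m : ℕ) (hm : 1 ≤ m) (hn : 2 * m < n) (γ : ℝ)
    (hγ1 : 2 * (m : ℝ) < γ) (hγ2 : γ < n) :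
    ∃ C > (0 : ℝ), ∀ x : EuclideanSpace ℝ (Fin n),
      ∫ y, Real.sqrt (1 + ‖y‖ ^ 2) ^ (-γ) * ‖x - y‖ ^ (2 * (m : ℝ) - n)
        ≤ C * Real.sqrt (1 + ‖x‖ ^ 2) ^ (2 * (m : ℝ) - γ) := by
  have hs : 0 < 2 * (m : ℝ) := by positivity
  obtain ⟨C, hC, h⟩ := stmt_1_general (volume : Measure (EuclideanSpace ℝ (Fin n))) hs hγ1
    (by rwa [finrank_euclideanSpace_fin])
  exact ⟨C, hC, by simpa only [finrank_euclideanSpace_fin] using fun x => (h x).2⟩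
end

section
/- Let n > 2m ≥ 2 be integers and let γ > n be real. Then there is a constant C (depending on n, m, γ) such that for every x ∈ ℝⁿ, ∫_{ℝⁿ} ⟨y⟩^{-γ} |x−y|^{2m−n} dy ≤ C ⟨x⟩^{2m−n}. -/
/-!
Put `ρ = ⟨x⟩ / 2` and split the integral at `|x - y| = ρ`. Outside the ball of radius `ρ` around `x`
the kernel is at most `ρ ^ s`, where `s = 2m - n`, and the weight `⟨y⟩ ^ (-γ)` is integrable because
`γ > n`. Inside the ball `⟨y⟩ ≥ ρ`, since `⟨·⟩` is 1-Lipschitz, so the weight is at most `ρ ^ (-γ)`;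
by scaling, the kernel has integral `ρ ^ (n + s)` times its integral over the unit ball, which is
finite because `s > -n`. The product is a multiple of `ρ ^ s * ρ ^ (n - γ)`, and `ρ ^ (n - γ)` is
bounded because `ρ ≥ 1 / 2` and `γ > n`.
-/

open MeasureTheory

open Metric Module

section JapaneseBracket

variable {E : Type*} [NormedAddCommGroup E]

/-- The Japanese bracket `⟨x⟩ = (1 + |x|²)^{1/2}`, written with `√` as in the theorem. -/
noncomputable def japaneseBracket (x : E) : ℝ := √(1 + ‖x‖ ^ 2)

lemma one_le_japaneseBracket (x : E) : 1 ≤ japaneseBracket x :=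
  Real.one_le_sqrt.2 (le_add_of_nonneg_right (by positivity))

lemma japaneseBracket_pos (x : E) : 0 < japaneseBracket x :=
  zero_lt_one.trans_le (one_le_japaneseBracket x)

lemma continuous_japaneseBracket : Continuous (japaneseBracket : E → ℝ) := by
  unfold japaneseBracket
  fun_prop

lemma japaneseBracket_eq_norm (x : E) : japaneseBracket x = ‖WithLp.toLp 2 ((1 : ℝ), x)‖ := by
  simp [japaneseBracket, WithLp.prod_norm_eq_of_L2]

lemma japaneseBracket_le_add_norm_sub (x y : E) :
    japaneseBracket x ≤ japaneseBracket y + ‖x - y‖ := by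
  have hdecomp : WithLp.toLp 2 ((1 : ℝ), x) =
      WithLp.toLp 2 ((1 : ℝ), y) + WithLp.toLp 2 ((0 : ℝ), x - y) := by
    simp [← WithLp.toLp_add]
  have hnorm : ‖WithLp.toLp 2 ((0 : ℝ), x - y)‖ = ‖x - y‖ := by
    simp
  rw [japaneseBracket_eq_norm, japaneseBracket_eq_norm, hdecomp, ← hnorm]
  exact norm_add_le _ _

lemma half_japaneseBracket_le_of_mem_ball {x y : E} (hy : y ∈ ball x (japaneseBracket x / 2)) :
    japaneseBracket x / 2 ≤ japaneseBracket y := by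
  rw [mem_ball', dist_eq_norm] at hy
  linarith [japaneseBracket_le_add_norm_sub x y]

lemma japaneseBracket_rpow_neg_le_of_mem_ball {γ : ℝ} (hγ : 0 ≤ γ) {x y : E}
    (hy : y ∈ ball x (japaneseBracket x / 2)) :
    japaneseBracket y ^ (-γ) ≤ (japaneseBracket x / 2) ^ (-γ) :=
  Real.rpow_le_rpow_of_nonpos (half_pos (japaneseBracket_pos x))
    (half_japaneseBracket_le_of_mem_ball hy) (neg_nonpos.2 hγ)

variable [NormedSpace ℝ E] [FiniteDimensional ℝ E] [MeasurableSpace E] [BorelSpace E]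
  (μ : Measure E) [μ.IsAddHaarMeasure] {γ : ℝ}

lemma integrable_japaneseBracket_rpow_neg (hγ : finrank ℝ E < γ) :
    Integrable (fun y => japaneseBracket y ^ (-γ)) μ := by
  convert integrable_rpow_neg_one_add_norm_sq (μ := μ) hγ using 2 with y
  rw [japaneseBracket, Real.sqrt_eq_rpow, ← Real.rpow_mul (by positivity)]
  ring_nf

lemma integral_japaneseBracket_rpow_neg_pos (hγ : finrank ℝ E < γ) :
    0 < ∫ y, japaneseBracket y ^ (-γ) ∂μ :=
  have hpos (y : E) : 0 < japaneseBracket y ^ (-γ) := Real.rpow_pos_of_pos (japaneseBracket_pos y) _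
  integral_pos_of_integrable_nonneg_nonzero
    (continuous_japaneseBracket.rpow_const fun y => .inl (japaneseBracket_pos y).ne')
    (integrable_japaneseBracket_rpow_neg μ hγ) (fun y => (hpos y).le) (hpos 0).ne'

end JapaneseBracket

section Kernel

variable {E : Type*} [NormedAddCommGroup E] {s ρ : ℝ} {x : E}

lemma preimage_sub_left_ball_zero (x : E) (ρ : ℝ) : (fun y => x - y) ⁻¹' ball 0 ρ = ball x ρ := by
  ext y
  rw [Set.mem_preimage, mem_ball_zero_iff, mem_ball', dist_eq_norm]

lemma norm_sub_rpow_le_of_mem_compl_ball (hs : s ≤ 0) (hρ : 0 < ρ) {y : E} (hy : y ∈ (ball x ρ)ᶜ) :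
    ‖x - y‖ ^ s ≤ ρ ^ s := by
  rw [Set.mem_compl_iff, mem_ball', dist_eq_norm, not_lt] at hy
  exact Real.rpow_le_rpow_of_nonpos hρ hy hs

variable [MeasurableSpace E] [BorelSpace E] {μ : Measure E} {w : E → ℝ} {M : ℝ}

lemma measurable_norm_sub_rpow (x : E) (s : ℝ) : Measurable fun y => ‖x - y‖ ^ s :=
  (by fun_prop : Continuous fun y => ‖x - y‖).measurable.pow_const s

lemma integrableOn_compl_ball_mul_norm_sub_rpow (hw : Integrable w μ) (hs : s ≤ 0) (hρ : 0 < ρ) :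
    IntegrableOn (fun y => w y * ‖x - y‖ ^ s) (ball x ρ)ᶜ μ := by
  refine hw.integrableOn.mul_bdd (c := ρ ^ s)
    (measurable_norm_sub_rpow x s).aestronglyMeasurable ?_
  filter_upwards [ae_restrict_mem measurableSet_ball.compl] with y hy
  rw [Real.norm_of_nonneg (by positivity)]
  exact norm_sub_rpow_le_of_mem_compl_ball hs hρ hy

lemma setIntegral_compl_ball_mul_norm_sub_rpow_le (hw : Integrable w μ) (hw₀ : 0 ≤ w) (hs : s ≤ 0)
    (hρ : 0 < ρ) :
    ∫ y in (ball x ρ)ᶜ, w y * ‖x - y‖ ^ s ∂μ ≤ ρ ^ s * ∫ y, w y ∂μ :=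
  calc ∫ y in (ball x ρ)ᶜ, w y * ‖x - y‖ ^ s ∂μ
      ≤ ∫ y in (ball x ρ)ᶜ, w y * ρ ^ s ∂μ :=
        setIntegral_mono_on (integrableOn_compl_ball_mul_norm_sub_rpow hw hs hρ)
          (hw.mul_const _).integrableOn measurableSet_ball.compl fun y hy =>
            mul_le_mul_of_nonneg_left (norm_sub_rpow_le_of_mem_compl_ball hs hρ hy) (hw₀ y)
    _ ≤ ∫ y, w y * ρ ^ s ∂μ :=
        setIntegral_le_integral (hw.mul_const _)
          (.of_forall fun y => mul_nonneg (hw₀ y) (by positivity))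
    _ = ρ ^ s * ∫ y, w y ∂μ := by rw [integral_mul_const, mul_comm]

variable [NormedSpace ℝ E] [FiniteDimensional ℝ E] [μ.IsAddHaarMeasure]

lemma setIntegral_ball_norm_rpow (hρ : 0 < ρ) :
    ∫ z in ball (0 : E) ρ, ‖z‖ ^ s ∂μ =
      ρ ^ (finrank ℝ E + s) * ∫ z in ball (0 : E) 1, ‖z‖ ^ s ∂μ := by
  have hscale := Measure.setIntegral_comp_smul_of_pos μ (fun z : E => ‖z‖ ^ s) (ball 0 1) hρ
  simp only [norm_smul, Real.norm_of_nonneg hρ.le, Real.mul_rpow hρ.le (norm_nonneg _),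
    integral_const_mul, smul_unitBall_of_pos hρ, smul_eq_mul] at hscale
  rw [Real.rpow_add hρ, Real.rpow_natCast, mul_assoc, hscale, mul_inv_cancel_left₀ (by positivity)]

lemma integrableOn_ball_norm_sub_rpow (hd : 0 < finrank ℝ E) (hs : -finrank ℝ E < s) :
    IntegrableOn (fun y => ‖x - y‖ ^ s) (ball x ρ) μ := by
  have hcentered : IntegrableOn (fun z : E => ‖z‖ ^ s) (ball 0 ρ) μ := by
    refine integrableOn_ball_of_norm_le_rpow (C := 1) (α := -s) hd (neg_lt.1 hs)
      (.of_forall fun z => ?_) (measurable_norm.pow_const s).aestronglyMeasurable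
    rw [neg_neg, one_mul, Real.norm_of_nonneg (by positivity)]
  rw [← preimage_sub_left_ball_zero]
  exact ((Measure.measurePreserving_sub_left μ x).integrableOn_comp_preimage
    (MeasurableEquiv.subLeft x).measurableEmbedding).2 hcentered

lemma setIntegral_ball_norm_sub_rpow (hρ : 0 < ρ) :
    ∫ y in ball x ρ, ‖x - y‖ ^ s ∂μ =
      ρ ^ (finrank ℝ E + s) * ∫ z in ball (0 : E) 1, ‖z‖ ^ s ∂μ := by
  rw [← setIntegral_ball_norm_rpow hρ, ← preimage_sub_left_ball_zero]
  exact (Measure.measurePreserving_sub_left μ x).setIntegral_preimage_emb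
    (MeasurableEquiv.subLeft x).measurableEmbedding (fun z => ‖z‖ ^ s) (ball 0 ρ)

lemma integrableOn_ball_mul_norm_sub_rpow (hd : 0 < finrank ℝ E) (hs : -finrank ℝ E < s)
    (hw : AEStronglyMeasurable w μ) (hwM : ∀ y ∈ ball x ρ, ‖w y‖ ≤ M) :
    IntegrableOn (fun y => w y * ‖x - y‖ ^ s) (ball x ρ) μ :=
  (integrableOn_ball_norm_sub_rpow hd hs).bdd_mul hw.restrict
    ((ae_restrict_mem measurableSet_ball).mono hwM)

lemma setIntegral_ball_mul_norm_sub_rpow_le (hd : 0 < finrank ℝ E) (hs : -finrank ℝ E < s)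
    (hρ : 0 < ρ) (hw : AEStronglyMeasurable w μ) (hwM : ∀ y ∈ ball x ρ, ‖w y‖ ≤ M) :
    ∫ y in ball x ρ, w y * ‖x - y‖ ^ s ∂μ ≤
      M * (ρ ^ (finrank ℝ E + s) * ∫ z in ball (0 : E) 1, ‖z‖ ^ s ∂μ) := by
  rw [← setIntegral_ball_norm_sub_rpow (x := x) hρ, ← integral_const_mul]
  exact setIntegral_mono_on (integrableOn_ball_mul_norm_sub_rpow hd hs hw hwM)
    ((integrableOn_ball_norm_sub_rpow hd hs).const_mul M) measurableSet_ball fun y hy =>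
      mul_le_mul_of_nonneg_right ((Real.le_norm_self _).trans (hwM y hy)) (by positivity)

lemma integrable_mul_norm_sub_rpow (hs : -finrank ℝ E < s) (hs₀ : s ≤ 0) (hρ : 0 < ρ)
    (hw : Integrable w μ) (hwM : ∀ y ∈ ball x ρ, ‖w y‖ ≤ M) :
    Integrable (fun y => w y * ‖x - y‖ ^ s) μ := by
  have hd : 0 < finrank ℝ E := by exact_mod_cast neg_lt_zero.1 (hs.trans_le hs₀)
  rw [← integrableOn_univ, ← Set.union_compl_self (ball x ρ)]
  exact (integrableOn_ball_mul_norm_sub_rpow hd hs hw.aestronglyMeasurable hwM).union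
    (integrableOn_compl_ball_mul_norm_sub_rpow hw hs₀ hρ)

lemma integral_mul_norm_sub_rpow_le (hs : -finrank ℝ E < s) (hs₀ : s ≤ 0) (hρ : 0 < ρ)
    (hw : Integrable w μ) (hw₀ : 0 ≤ w) (hwM : ∀ y ∈ ball x ρ, ‖w y‖ ≤ M) :
    ∫ y, w y * ‖x - y‖ ^ s ∂μ ≤
      ρ ^ s * (∫ y, w y ∂μ + M * ρ ^ finrank ℝ E * ∫ z in ball (0 : E) 1, ‖z‖ ^ s ∂μ) := by
  have hd : 0 < finrank ℝ E := by exact_mod_cast neg_lt_zero.1 (hs.trans_le hs₀)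
  have hnear := setIntegral_ball_mul_norm_sub_rpow_le hd hs hρ hw.aestronglyMeasurable hwM
  have hfar := setIntegral_compl_ball_mul_norm_sub_rpow_le (x := x) hw hw₀ hs₀ hρ
  rw [Real.rpow_add hρ, Real.rpow_natCast] at hnear
  rw [← integral_add_compl measurableSet_ball (integrable_mul_norm_sub_rpow hs hs₀ hρ hw hwM)]
  linarith

end Kernel

theorem stmt_2_general {E : Type*} [NormedAddCommGroup E] [NormedSpace ℝ E]
    [FiniteDimensional ℝ E] [MeasurableSpace E] [BorelSpace E] (μ : Measure E)
    [μ.IsAddHaarMeasure] {s γ : ℝ} (hs : -finrank ℝ E < s) (hs₀ : s ≤ 0) (hγ : finrank ℝ E < γ) :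
    ∃ C > 0, ∀ x : E, Integrable (fun y => japaneseBracket y ^ (-γ) * ‖x - y‖ ^ s) μ ∧
      ∫ y, japaneseBracket y ^ (-γ) * ‖x - y‖ ^ s ∂μ ≤ C * japaneseBracket x ^ s := by
  set d := finrank ℝ E
  have hw := integrable_japaneseBracket_rpow_neg μ hγ
  have hw₀ (y : E) : 0 ≤ japaneseBracket y ^ (-γ) := Real.rpow_nonneg (japaneseBracket_pos y).le _
  set I := ∫ y : E, japaneseBracket y ^ (-γ) ∂μ
  set K := ∫ z in ball (0 : E) 1, ‖z‖ ^ s ∂μ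
  have hI : 0 < I := integral_japaneseBracket_rpow_neg_pos μ hγ
  have hK : 0 ≤ K := integral_nonneg fun z => by positivity
  refine ⟨(1 / 2) ^ s * (I + (1 / 2) ^ (d - γ) * K), mul_pos (by positivity)
    (add_pos_of_pos_of_nonneg hI (mul_nonneg (by positivity) hK)), fun x => ?_⟩
  set ρ := japaneseBracket x / 2 with hρ_def
  have hρ : 1 / 2 ≤ ρ := by linarith [one_le_japaneseBracket x]
  have hρ₀ : 0 < ρ := by linarith
  have hnear : ∀ y ∈ ball x ρ, ‖japaneseBracket y ^ (-γ)‖ ≤ ρ ^ (-γ) := fun y hy => by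
    rw [Real.norm_of_nonneg (hw₀ y)]
    exact japaneseBracket_rpow_neg_le_of_mem_ball (d.cast_nonneg.trans hγ.le) hy
  have hρ_rpow : ρ ^ (-γ) * ρ ^ d ≤ (1 / 2) ^ (d - γ) := by
    rw [← Real.rpow_add_natCast hρ₀.ne', neg_add_eq_sub]
    exact Real.rpow_le_rpow_of_nonpos (by norm_num) hρ (by linarith)
  refine ⟨integrable_mul_norm_sub_rpow hs hs₀ hρ₀ hw hnear, ?_⟩
  calc ∫ y, japaneseBracket y ^ (-γ) * ‖x - y‖ ^ s ∂μ
      ≤ ρ ^ s * (I + ρ ^ (-γ) * ρ ^ d * K) :=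
        integral_mul_norm_sub_rpow_le hs hs₀ hρ₀ hw hw₀ hnear
    _ ≤ ρ ^ s * (I + (1 / 2) ^ (d - γ) * K) := by gcongr
    _ = (1 / 2) ^ s * (I + (1 / 2) ^ (d - γ) * K) * japaneseBracket x ^ s := by
        rw [hρ_def, div_eq_mul_one_div,
          Real.mul_rpow (japaneseBracket_pos x).le (by norm_num)]
        ring

/-- For `γ > n`, `∫ ⟨y⟩^{-γ} |x−y|^{2m−n} dy ≤ C ⟨x⟩^{2m−n}`. -/
theorem stmt_2 (n m : ℕ) (hm : 1 ≤ m) (hn : 2 * m < n) (γ : ℝ) (hγ : (n : ℝ) < γ) :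
    ∃ C > (0 : ℝ), ∀ x : EuclideanSpace ℝ (Fin n),
      ∫ y, Real.sqrt (1 + ‖y‖ ^ 2) ^ (-γ) * ‖x - y‖ ^ (2 * (m : ℝ) - n)
        ≤ C * Real.sqrt (1 + ‖x‖ ^ 2) ^ (2 * (m : ℝ) - n) := by
  have hn' : 2 * (m : ℝ) < n := by exact_mod_cast hn
  obtain ⟨C, hC, h⟩ := stmt_2_general (volume : Measure (EuclideanSpace ℝ (Fin n)))
    (s := 2 * m - n) (by simpa using Nat.succ_le_iff.1 hm) (by linarith) (by simpa using hγ)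
  exact ⟨C, hC, fun x => (h x).2⟩
end

section
/- Let n ≥ 1 be an integer, α > 0 a real number, and k ≥ 0 an integer. There is a constant C (depending on n, α, k) such that for every x ∈ ℝⁿ with |x| ≥ 1 there exists a polynomial P(x,·) : ℝⁿ → ℝ of degree at most k in y with the property that for all y ∈ ℝⁿ with y ≠ x: | |x−y|^{-α} − P(x,y) | ≤ C ( |y|^{k+1} |x|^{-α−k−1} + 𝟙_{\{2|y| ≥ |x|\}} |x−y|^{-α} ). -/
open MeasureTheory

/-!
A similarity of the space moves `x` to a fixed unit vector `e`, so it suffices to approximate the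
single function `z ↦ |z|^{-α}` around `e`, and `C` does not depend on `x`. This function is real
analytic at `e`, and `P` is its Taylor polynomial. Taylor's formula gives the bound on some ball
`|y| < δ`. For `|y| ≥ δ` the polynomial is itself `O(|y|^{k+1})`, as its degree is at most `k`, and
the kernel is bounded for `|y| < 1/2` and equal to the indicator term for `|y| ≥ 1/2`.
-/

section PowerSeries

variable {𝕜 E F : Type*} [NontriviallyNormedField 𝕜] [NormedAddCommGroup E] [NormedSpace 𝕜 E]
  [NormedAddCommGroup F] [NormedSpace 𝕜 F]

lemma norm_partialSum_le_of_le_norm (p : FormalMultilinearSeries 𝕜 E F) (n : ℕ) {δ : ℝ}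
    (hδ : 0 < δ) {y : E} (hy : δ ≤ ‖y‖) :
    ‖p.partialSum n y‖ ≤ (∑ j ∈ Finset.range n, ‖p j‖ * δ ^ j) * (‖y‖ / δ) ^ n := by
  rw [Finset.sum_mul]
  refine norm_sum_le_of_le _ fun j hj => ?_
  have hratio : 1 ≤ ‖y‖ / δ := (one_le_div hδ).2 hy
  calc ‖p j fun _ => y‖ ≤ ‖p j‖ * ‖y‖ ^ j := by simpa using (p j).le_opNorm fun _ => y
    _ = ‖p j‖ * δ ^ j * (‖y‖ / δ) ^ j := by
      rw [mul_assoc, ← mul_pow, mul_div_cancel₀ _ hδ.ne']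
    _ ≤ ‖p j‖ * δ ^ j * (‖y‖ / δ) ^ n := by
      have hjn : j ≤ n := (Finset.mem_range.1 hj).le
      gcongr

lemma norm_sub_partialSum_le_of_le_norm (p : FormalMultilinearSeries 𝕜 E F) (n : ℕ) {δ R B : ℝ}
    (hδ : 0 < δ) {y : E} (hy : δ ≤ ‖y‖) {v : F} (hv : ‖y‖ < R → ‖v‖ ≤ B) :
    ‖v - p.partialSum n y‖ ≤
      (|B| + ∑ j ∈ Finset.range n, ‖p j‖ * δ ^ j) * (‖y‖ / δ) ^ n +
        if R ≤ ‖y‖ then ‖v‖ else 0 := by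
  have hv' : ‖v‖ ≤ |B| * (‖y‖ / δ) ^ n + if R ≤ ‖y‖ then ‖v‖ else 0 := by
    split_ifs with hR
    · exact le_add_of_nonneg_left (by positivity)
    · have hratio : 1 ≤ (‖y‖ / δ) ^ n := one_le_pow₀ ((one_le_div hδ).2 hy)
      calc ‖v‖ ≤ |B| := (hv (not_le.1 hR)).trans (le_abs_self B)
        _ ≤ |B| * (‖y‖ / δ) ^ n + 0 := by
          rw [add_zero]
          exact le_mul_of_one_le_right (abs_nonneg B) hratio
  linarith [norm_sub_le v (p.partialSum n y), norm_partialSum_le_of_le_norm p n hδ hy]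

lemma exists_norm_sub_partialSum_le_of_hasFPowerSeriesAt {f : E → F}
    {p : FormalMultilinearSeries 𝕜 E F} {x : E} (hf : HasFPowerSeriesAt f p x) {R B : ℝ}
    (hB : ∀ y, ‖y‖ < R → ‖f (x + y)‖ ≤ B) (n : ℕ) :
    ∃ C > 0, ∀ y, ‖f (x + y) - p.partialSum n y‖ ≤
      C * (‖y‖ ^ n + if R ≤ ‖y‖ then ‖f (x + y)‖ else 0) := by
  obtain ⟨c, hc, hTaylor⟩ := (hf.isBigO_sub_partialSum_pow n).exists_pos
  obtain ⟨δ, hδ, hnear⟩ := Metric.eventually_nhds_iff.1 hTaylor.bound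
  set A := (|B| + ∑ j ∈ Finset.range n, ‖p j‖ * δ ^ j) / δ ^ n with hA
  have hA0 : 0 ≤ A := by positivity
  refine ⟨c + A + 1, by positivity, fun y => ?_⟩
  set I := if R ≤ ‖y‖ then ‖f (x + y)‖ else 0
  have hI : 0 ≤ I := by positivity
  rcases lt_or_ge ‖y‖ δ with hy | hy
  · calc ‖f (x + y) - p.partialSum n y‖ ≤ c * ‖y‖ ^ n := by
          simpa using hnear (by simpa using hy)
      _ ≤ (c + A + 1) * (‖y‖ ^ n + I) := by gcongr <;> linarith
  · calc ‖f (x + y) - p.partialSum n y‖ ≤ A * ‖y‖ ^ n + 1 * I := by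
          rw [hA, one_mul, div_mul_eq_mul_div, mul_div_assoc, ← div_pow]
          exact norm_sub_partialSum_le_of_le_norm p n hδ hy (hB y)
      _ ≤ (c + A + 1) * (‖y‖ ^ n + I) := by
        rw [mul_add]
        gcongr <;> linarith

end PowerSeries

section Polynomial

variable {R M ι : Type*} [CommSemiring R] [AddCommMonoid M] [Module R M] [Finite ι]

lemma exists_isHomogeneous_eval_repr_eq_multilinearMap (b : Module.Basis ι R M) {j : ℕ}
    (f : MultilinearMap R (fun _ : Fin j => M) R) :
    ∃ P : MvPolynomial ι R, P.IsHomogeneous j ∧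
      ∀ y, MvPolynomial.eval (b.repr y) P = f fun _ => y := by
  have := Fintype.ofFinite ι
  refine ⟨∑ σ : Fin j → ι, MvPolynomial.C (f (b ∘ σ)) * ∏ m, MvPolynomial.X (σ m), ?_, fun y => ?_⟩
  · refine MvPolynomial.IsHomogeneous.sum _ _ _ fun σ _ => .C_mul ?_ _
    simpa using MvPolynomial.IsHomogeneous.prod Finset.univ (fun m => MvPolynomial.X (σ m))
      (fun _ => 1) fun m _ => MvPolynomial.isHomogeneous_X R (σ m)
  · calc MvPolynomial.eval (b.repr y)
          (∑ σ : Fin j → ι, MvPolynomial.C (f (b ∘ σ)) * ∏ m, MvPolynomial.X (σ m))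
        = ∑ σ : Fin j → ι, (∏ m, b.repr y (σ m)) * f (b ∘ σ) := by simp [mul_comm]
      _ = ∑ σ : Fin j → ι, f fun m => b.repr y (σ m) • b (σ m) := by
        simp only [f.map_smul_univ, smul_eq_mul, Function.comp_def]
      _ = f fun _ => ∑ i, b.repr y i • b i := (f.map_sum fun _ i => b.repr y i • b i).symm
      _ = f fun _ => y := by rw [b.sum_repr]

lemma exists_totalDegree_le_eval_repr_eq_partialSum [TopologicalSpace R] [ContinuousAdd R]
    [ContinuousConstSMul R R] [TopologicalSpace M] [ContinuousAdd M] [ContinuousConstSMul R M]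
    (b : Module.Basis ι R M) (p : FormalMultilinearSeries R M R) (k : ℕ) :
    ∃ P : MvPolynomial ι R, P.totalDegree ≤ k ∧
      ∀ y, MvPolynomial.eval (b.repr y) P = p.partialSum (k + 1) y := by
  choose Q hQ hQeval using fun j =>
    exists_isHomogeneous_eval_repr_eq_multilinearMap b (p j).toMultilinearMap
  refine ⟨∑ j ∈ Finset.range (k + 1), Q j, ?_, fun y => ?_⟩
  · exact MvPolynomial.totalDegree_finsetSum_le fun j hj =>
      (hQ j).totalDegree_le.trans (Finset.mem_range_succ_iff.1 hj)
  · rw [map_sum]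
    exact Finset.sum_congr rfl fun j _ => hQeval j y

end Polynomial

lemma exists_norm_add_rpow_le {E : Type*} [SeminormedAddCommGroup E] {x : E} {r : ℝ}
    (hr : r < ‖x‖) (s : ℝ) : ∃ B, ∀ y, ‖y‖ < r → ‖‖x + y‖ ^ s‖ ≤ B := by
  have hcont : ContinuousOn (fun t : ℝ => t ^ s) (Set.Icc (‖x‖ - r) (‖x‖ + r)) :=
    fun t ht => (Real.continuousAt_rpow_const t s
      (.inl ((sub_pos.2 hr).trans_le ht.1).ne')).continuousWithinAt
  obtain ⟨B, hB⟩ := isCompact_Icc.exists_bound_of_continuousOn hcont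
  refine ⟨B, fun y hy => hB _ ⟨?_, ?_⟩⟩
  · linarith [norm_sub_le_norm_add x y]
  · linarith [norm_add_le x y]

section InnerProductSpace

variable {E : Type*} [NormedAddCommGroup E] [InnerProductSpace ℝ E]

lemma analyticAt_norm_rpow {x : E} (hx : x ≠ 0) (s : ℝ) :
    AnalyticAt ℝ (fun y : E => ‖y‖ ^ s) x :=
  ((contDiffAt_norm ℝ hx).rpow_const_of_ne (norm_ne_zero_iff.2 hx)).analyticAt

lemma exists_continuousLinearMap_apply_eq_and_norm_apply {x : E} (hx : x ≠ 0) (e : E) :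
    ∃ L : E →L[ℝ] E, L x = e ∧ ∀ y, ‖L y‖ = ‖e‖ / ‖x‖ * ‖y‖ := by
  set c := ‖e‖ / ‖x‖
  have hnorm (y : E) : ‖c • y‖ = c * ‖y‖ := norm_smul_of_nonneg (by positivity) y
  have hcx : ‖c • x‖ = ‖e‖ := by rw [hnorm, div_mul_cancel₀ _ (norm_ne_zero_iff.2 hx)]
  let ρ : E ≃ₗᵢ[ℝ] E := (ℝ ∙ (c • x - e))ᗮ.reflection
  refine ⟨c • (ρ : E →L[ℝ] E), ?_, fun y => ?_⟩
  · simpa using Submodule.reflection_sub hcx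
  · simpa using hnorm (ρ y)

lemma exists_norm_sub_rpow_sub_partialSum_le (s : ℝ) (n : ℕ) :
    ∃ C > 0, ∀ x : E, x ≠ 0 → ∃ p : FormalMultilinearSeries ℝ E ℝ, ∀ y,
      |‖x - y‖ ^ s - p.partialSum n y| ≤
        C * (‖x‖ ^ s * (‖y‖ / ‖x‖) ^ n + if ‖x‖ ≤ 2 * ‖y‖ then ‖x - y‖ ^ s else 0) := by
  rcases subsingleton_or_nontrivial E with hE | hE
  · exact ⟨1, one_pos, fun x hx => absurd (Subsingleton.elim x 0) hx⟩
  obtain ⟨e, he⟩ := exists_norm_eq E zero_le_one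
  obtain ⟨q, hq⟩ := analyticAt_norm_rpow (norm_ne_zero_iff.1 (he ▸ one_ne_zero)) s
  obtain ⟨B, hB⟩ := exists_norm_add_rpow_le (one_half_lt_one.trans_eq he.symm) s
  obtain ⟨C, hC, hCq⟩ := exists_norm_sub_partialSum_le_of_hasFPowerSeriesAt hq hB n
  refine ⟨C, hC, fun x hx => ?_⟩
  have hx' : 0 < ‖x‖ := norm_pos_iff.2 hx
  obtain ⟨L, hLx, hL⟩ := exists_continuousLinearMap_apply_eq_and_norm_apply hx e
  refine ⟨‖x‖ ^ s • q.compContinuousLinearMap (-L), fun y => ?_⟩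
  have hLy : ‖-L y‖ = ‖y‖ / ‖x‖ := by rw [norm_neg, hL, he]; ring
  have hkernel : ‖x - y‖ ^ s = ‖x‖ ^ s * ‖e + -L y‖ ^ s := by
    rw [← hLx, ← sub_eq_add_neg, ← map_sub, hL, he,
      ← Real.mul_rpow hx'.le (by positivity)]
    field_simp
  have hpartial : (‖x‖ ^ s • q.compContinuousLinearMap (-L)).partialSum n y =
      ‖x‖ ^ s * q.partialSum n (-L y) := by
    simp [FormalMultilinearSeries.partialSum, Finset.mul_sum, Function.comp_def]
  have hind : 1 / 2 ≤ ‖y‖ / ‖x‖ ↔ ‖x‖ ≤ 2 * ‖y‖ := by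
    rw [div_le_div_iff₀ two_pos hx', one_mul, mul_comm]
  have hunit := hCq (-L y)
  rw [hLy, Real.norm_eq_abs, Real.norm_of_nonneg (by positivity)] at hunit
  calc |‖x - y‖ ^ s - (‖x‖ ^ s • q.compContinuousLinearMap (-L)).partialSum n y|
      = ‖x‖ ^ s * |‖e + -L y‖ ^ s - q.partialSum n (-L y)| := by
        rw [hkernel, hpartial, ← mul_sub, abs_mul, abs_of_pos (by positivity)]
    _ ≤ ‖x‖ ^ s * (C * ((‖y‖ / ‖x‖) ^ n + if 1 / 2 ≤ ‖y‖ / ‖x‖ then ‖e + -L y‖ ^ s else 0)) := by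
        gcongr
    _ = C * (‖x‖ ^ s * (‖y‖ / ‖x‖) ^ n + if ‖x‖ ≤ 2 * ‖y‖ then ‖x - y‖ ^ s else 0) := by
        simp only [hind, hkernel]
        split_ifs <;> ring

end InnerProductSpace

theorem stmt_4_general {ι : Type*} [Fintype ι] (α : ℝ) (k : ℕ) :
    ∃ C > (0 : ℝ), ∀ x : EuclideanSpace ℝ ι, x ≠ 0 →
      ∃ P : MvPolynomial ι ℝ, P.totalDegree ≤ k ∧
        ∀ y : EuclideanSpace ℝ ι, y ≠ x →
          |‖x - y‖ ^ (-α) - MvPolynomial.eval (fun i => y i) P| ≤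
            C * (‖y‖ ^ ((k : ℝ) + 1) * ‖x‖ ^ (-α - k - 1) +
              (if ‖x‖ ≤ 2 * ‖y‖ then ‖x - y‖ ^ (-α) else 0)) := by
  obtain ⟨C, hC, hbound⟩ := exists_norm_sub_rpow_sub_partialSum_le (E := EuclideanSpace ℝ ι)
    (-α) (k + 1)
  refine ⟨C, hC, fun x hx => ?_⟩
  obtain ⟨p, hp⟩ := hbound x hx
  obtain ⟨P, hdeg, heval⟩ := exists_totalDegree_le_eval_repr_eq_partialSum
    (EuclideanSpace.basisFun ι ℝ).toBasis p k
  refine ⟨P, hdeg, fun y _ => ?_⟩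
  have hscale : ‖x‖ ^ (-α) * (‖y‖ / ‖x‖) ^ (k + 1) =
      ‖y‖ ^ ((k : ℝ) + 1) * ‖x‖ ^ (-α - k - 1) := by
    rw [sub_sub, Real.rpow_sub (norm_pos_iff.2 hx), ← Nat.cast_add_one, Real.rpow_natCast,
      Real.rpow_natCast, div_pow]
    ring
  rw [← hscale]
  exact heval y ▸ hp y

/-- Polynomial approximation of the kernel `|x−y|^{-α}`: for every `|x| ≥ 1` there is a
polynomial `P(x,·)` of degree at most `k` in `y` with
`||x−y|^{-α} − P(x,y)| ≤ C(|y|^{k+1}|x|^{-α−k−1} + 𝟙_{2|y| ≥ |x|}|x−y|^{-α})`. -/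
theorem stmt_4 (n : ℕ) (hn : 1 ≤ n) (α : ℝ) (hα : 0 < α) (k : ℕ) :
    ∃ C > (0 : ℝ), ∀ x : EuclideanSpace ℝ (Fin n), 1 ≤ ‖x‖ →
      ∃ P : MvPolynomial (Fin n) ℝ, P.totalDegree ≤ k ∧
        ∀ y : EuclideanSpace ℝ (Fin n), y ≠ x →
          |‖x - y‖ ^ (-α) - MvPolynomial.eval (fun i => y i) P| ≤
            C * (‖y‖ ^ ((k : ℝ) + 1) * ‖x‖ ^ (-α - k - 1) +
              (if ‖x‖ ≤ 2 * ‖y‖ then ‖x - y‖ ^ (-α) else 0)) := by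
  obtain ⟨C, hC, hbound⟩ := stmt_4_general (ι := Fin n) α k
  exact ⟨C, hC, fun x hx => hbound x (norm_pos_iff.1 (one_pos.trans_le hx))⟩
end

section
/- Fix integers n > 2m ≥ 2 and j ≥ 0, a real η > −1, constants C₀ > 0 and λ₀ ∈ (0,1), and set N := ⌈n/2⌉ + 1. Let r₁, r₂ > 0 with r₁ ≤ 1 and r₂ ≤ 1, and let σ ∈ {+1, −1}. Suppose a, b₁, b₂ : (0,1) → ℂ are N times continuously differentiable, vanish for λ ≥ λ₀, and satisfy for all 0 ≤ ℓ ≤ N and λ ∈ (0,1): |a^{(ℓ)}(λ)| ≤ C₀ λ^{η−ℓ}, |b₁^{(ℓ)}(λ)| ≤ C₀ λ^{-ℓ} ⟨λr₁⟩^{(n+1)/2−2m+j}, and |b₂^{(ℓ)}(λ)| ≤ C₀ λ^{-ℓ} ⟨λr₂⟩^{(1−n)/2}. Then |∫₀¹ e^{iλ(r₁+σ r₂)} a(λ) b₁(λ) b₂(λ) dλ| ≤ C, where C depends only on n, m, j, η, C₀, λ₀. -/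
open MeasureTheory

/-!
No oscillation is needed when `r₁, r₂ ≤ 1`: on `(0, 1)` the brackets `⟨λ rᵢ⟩` lie between `1` and
`⟨1⟩`, so any fixed power of them is bounded. The size bounds (`ℓ = 0`) on the amplitudes then
dominate the integrand by a constant multiple of `λ ^ η`, which is integrable on `(0, 1)` because
`η > -1`.
-/

lemma sqrt_one_add_sq_rpow_le {x R : ℝ} (hx : |x| ≤ R) (p : ℝ) :
    √(1 + x ^ 2) ^ p ≤ √(1 + R ^ 2) ^ |p| := by
  have one_le : 1 ≤ √(1 + x ^ 2) := Real.one_le_sqrt.2 (le_add_of_nonneg_right (sq_nonneg x))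
  have sq_le : x ^ 2 ≤ R ^ 2 := sq_le_sq.2 (hx.trans (le_abs_self R))
  calc √(1 + x ^ 2) ^ p
      ≤ √(1 + x ^ 2) ^ |p| := Real.rpow_le_rpow_of_exponent_le one_le (le_abs_self p)
    _ ≤ √(1 + R ^ 2) ^ |p| := by gcongr

section PowerMajorant

variable {E : Type*} [NormedAddCommGroup E] {f : ℝ → E} {K T η : ℝ}

lemma integrableOn_Ioo_const_mul_rpow (hT : 0 < T) (hη : -1 < η) :
    IntegrableOn (fun t : ℝ => K * t ^ η) (Set.Ioo 0 T) :=
  ((intervalIntegral.integrableOn_Ioo_rpow_iff hT).2 hη).const_mul K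

lemma integrableOn_Ioo_of_norm_le_const_mul_rpow (hT : 0 < T) (hη : -1 < η)
    (hf : AEStronglyMeasurable f (volume.restrict (Set.Ioo 0 T)))
    (hfK : ∀ t ∈ Set.Ioo 0 T, ‖f t‖ ≤ K * t ^ η) : IntegrableOn f (Set.Ioo 0 T) :=
  (integrableOn_Ioo_const_mul_rpow hT hη).mono' hf (ae_restrict_of_forall_mem measurableSet_Ioo hfK)

lemma setIntegral_Ioo_rpow (hT : 0 ≤ T) (hη : -1 < η) :
    ∫ t in Set.Ioo 0 T, t ^ η = T ^ (η + 1) / (η + 1) := by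
  rw [← integral_Ioc_eq_integral_Ioo, ← intervalIntegral.integral_of_le hT,
    integral_rpow (.inl hη), Real.zero_rpow (by linarith), sub_zero]

lemma norm_setIntegral_Ioo_le_of_norm_le_const_mul_rpow [NormedSpace ℝ E]
    (hT : 0 < T) (hη : -1 < η) (hfK : ∀ t ∈ Set.Ioo 0 T, ‖f t‖ ≤ K * t ^ η) :
    ‖∫ t in Set.Ioo 0 T, f t‖ ≤ K * (T ^ (η + 1) / (η + 1)) :=
  calc ‖∫ t in Set.Ioo 0 T, f t‖
      ≤ ∫ t in Set.Ioo 0 T, K * t ^ η :=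
        norm_integral_le_of_norm_le (integrableOn_Ioo_const_mul_rpow hT hη)
          (ae_restrict_of_forall_mem measurableSet_Ioo hfK)
    _ = K * (T ^ (η + 1) / (η + 1)) := by rw [integral_const_mul, setIntegral_Ioo_rpow hT.le hη]

end PowerMajorant

lemma norm_le_of_norm_le_sqrt_one_add_sq_rpow {z : ℂ} {C₀ R r t p : ℝ} (hC₀ : 0 ≤ C₀)
    (ht : t ∈ Set.Ioo (0 : ℝ) 1) (hr : |r| ≤ R) (hz : ‖z‖ ≤ C₀ * √(1 + (t * r) ^ 2) ^ p) :
    ‖z‖ ≤ C₀ * √(1 + R ^ 2) ^ |p| := by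
  have abs_mul_le : |t * r| ≤ R := by
    rw [abs_mul, abs_of_pos ht.1]
    exact (mul_le_of_le_one_left (abs_nonneg r) ht.2.le).trans hr
  exact hz.trans (mul_le_mul_of_nonneg_left (sqrt_one_add_sq_rpow_le abs_mul_le p) hC₀)

theorem stmt_5_general {η C₀ R p q r₁ r₂ : ℝ} (hη : -1 < η) (hC₀ : 0 ≤ C₀)
    (hr₁ : |r₁| ≤ R) (hr₂ : |r₂| ≤ R) (ω : ℝ) {a b₁ b₂ : ℝ → ℂ}
    (ha_meas : AEStronglyMeasurable a (volume.restrict (Set.Ioo 0 1)))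
    (hb₁_meas : AEStronglyMeasurable b₁ (volume.restrict (Set.Ioo 0 1)))
    (hb₂_meas : AEStronglyMeasurable b₂ (volume.restrict (Set.Ioo 0 1)))
    (ha : ∀ t ∈ Set.Ioo (0 : ℝ) 1, ‖a t‖ ≤ C₀ * t ^ η)
    (hb₁ : ∀ t ∈ Set.Ioo (0 : ℝ) 1, ‖b₁ t‖ ≤ C₀ * √(1 + (t * r₁) ^ 2) ^ p)
    (hb₂ : ∀ t ∈ Set.Ioo (0 : ℝ) 1, ‖b₂ t‖ ≤ C₀ * √(1 + (t * r₂) ^ 2) ^ q) :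
    IntegrableOn (fun t : ℝ => Complex.exp (Complex.I * Complex.ofReal (ω * t)) *
        (a t * b₁ t * b₂ t)) (Set.Ioo 0 1) ∧
      ‖∫ t in Set.Ioo (0 : ℝ) 1, Complex.exp (Complex.I * Complex.ofReal (ω * t)) *
        (a t * b₁ t * b₂ t)‖ ≤ C₀ ^ 3 * √(1 + R ^ 2) ^ (|p| + |q|) / (η + 1) := by
  have bracket_pos : 0 < √(1 + R ^ 2) := by positivity
  have majorant : ∀ t ∈ Set.Ioo (0 : ℝ) 1,
      ‖Complex.exp (Complex.I * Complex.ofReal (ω * t)) * (a t * b₁ t * b₂ t)‖ ≤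
        C₀ ^ 3 * √(1 + R ^ 2) ^ (|p| + |q|) * t ^ η := by
    intro t ht
    have t_nonneg : 0 ≤ t := ht.1.le
    rw [norm_mul, Complex.norm_exp_I_mul_ofReal, one_mul, norm_mul, norm_mul]
    calc ‖a t‖ * ‖b₁ t‖ * ‖b₂ t‖
        ≤ (C₀ * t ^ η) * (C₀ * √(1 + R ^ 2) ^ |p|) * (C₀ * √(1 + R ^ 2) ^ |q|) := by
          gcongr
          · exact ha t ht
          · exact norm_le_of_norm_le_sqrt_one_add_sq_rpow hC₀ ht hr₁ (hb₁ t ht)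
          · exact norm_le_of_norm_le_sqrt_one_add_sq_rpow hC₀ ht hr₂ (hb₂ t ht)
      _ = C₀ ^ 3 * √(1 + R ^ 2) ^ (|p| + |q|) * t ^ η := by
          rw [Real.rpow_add bracket_pos]; ring
  have phase_continuous : Continuous fun t : ℝ =>
      Complex.exp (Complex.I * Complex.ofReal (ω * t)) := by fun_prop
  refine ⟨integrableOn_Ioo_of_norm_le_const_mul_rpow one_pos hη
    (phase_continuous.aestronglyMeasurable.mul ((ha_meas.mul hb₁_meas).mul hb₂_meas)) majorant, ?_⟩
  simpa only [Real.one_rpow, mul_one_div] using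
    norm_setIntegral_Ioo_le_of_norm_le_const_mul_rpow one_pos hη majorant

/-- Bound `Λ_{j,η}(r₁,r₂) ≤ C` when `r₁, r₂ ≤ 1`. -/
theorem stmt_5 (n m j : ℕ) (hm : 1 ≤ m) (hn : 2 * m < n) (η : ℝ) (hη : -1 < η)
    (C₀ : ℝ) (hC₀ : 0 < C₀) (lam0 : ℝ) (hlam0 : 0 < lam0) (hlam0' : lam0 < 1) :
    ∃ C > (0 : ℝ), ∀ r₁ r₂ : ℝ, 0 < r₁ → r₁ ≤ 1 → 0 < r₂ → r₂ ≤ 1 →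
      ∀ σ : ℝ, (σ = 1 ∨ σ = -1) →
      ∀ a b₁ b₂ : ℝ → ℂ,
        ContDiffOn ℝ ((n + 1) / 2 + 1 : ℕ) a (Set.Ioo 0 1) →
        ContDiffOn ℝ ((n + 1) / 2 + 1 : ℕ) b₁ (Set.Ioo 0 1) →
        ContDiffOn ℝ ((n + 1) / 2 + 1 : ℕ) b₂ (Set.Ioo 0 1) →
        (∀ lam : ℝ, lam0 ≤ lam → a lam = 0) →
        (∀ lam : ℝ, lam0 ≤ lam → b₁ lam = 0) →
        (∀ lam : ℝ, lam0 ≤ lam → b₂ lam = 0) →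
        (∀ ℓ ≤ (n + 1) / 2 + 1, ∀ lam ∈ Set.Ioo (0 : ℝ) 1,
          ‖iteratedDerivWithin ℓ a (Set.Ioo 0 1) lam‖ ≤ C₀ * lam ^ (η - ℓ)) →
        (∀ ℓ ≤ (n + 1) / 2 + 1, ∀ lam ∈ Set.Ioo (0 : ℝ) 1,
          ‖iteratedDerivWithin ℓ b₁ (Set.Ioo 0 1) lam‖ ≤
            C₀ * lam ^ (-(ℓ : ℝ)) *
              Real.sqrt (1 + (lam * r₁) ^ 2) ^ (((n : ℝ) + 1) / 2 - 2 * m + j)) →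
        (∀ ℓ ≤ (n + 1) / 2 + 1, ∀ lam ∈ Set.Ioo (0 : ℝ) 1,
          ‖iteratedDerivWithin ℓ b₂ (Set.Ioo 0 1) lam‖ ≤
            C₀ * lam ^ (-(ℓ : ℝ)) *
              Real.sqrt (1 + (lam * r₂) ^ 2) ^ ((1 - (n : ℝ)) / 2)) →
        ‖∫ lam in Set.Ioo (0 : ℝ) 1,
            Complex.exp (Complex.I * Complex.ofReal ((r₁ + σ * r₂) * lam)) *
              (a lam * b₁ lam * b₂ lam)‖ ≤ C := by
  have η_add_one_pos : 0 < η + 1 := by linarith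
  refine ⟨C₀ ^ 3 * √(1 + 1 ^ 2) ^ (|((n : ℝ) + 1) / 2 - 2 * m + j| + |(1 - (n : ℝ)) / 2|) / (η + 1),
    by positivity, ?_⟩
  intro r₁ r₂ hr₁ hr₁' hr₂ hr₂' σ _ a b₁ b₂ ha_diff hb₁_diff hb₂_diff _ _ _ ha hb₁ hb₂
  exact (stmt_5_general hη hC₀.le ((abs_of_pos hr₁).trans_le hr₁') ((abs_of_pos hr₂).trans_le hr₂')
    (r₁ + σ * r₂)
    (ha_diff.continuousOn.aestronglyMeasurable measurableSet_Ioo)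
    (hb₁_diff.continuousOn.aestronglyMeasurable measurableSet_Ioo)
    (hb₂_diff.continuousOn.aestronglyMeasurable measurableSet_Ioo)
    (fun t ht => by simpa using ha 0 (Nat.zero_le _) t ht)
    (fun t ht => by simpa using hb₁ 0 (Nat.zero_le _) t ht)
    (fun t ht => by simpa using hb₂ 0 (Nat.zero_le _) t ht)).2
end

section
/- Fix integers n > 2m ≥ 2 and j ≥ 0, a real η > −1, constants C₀ > 0 and λ₀ ∈ (0,1), and set N := ⌈n/2⌉ + 1. Let r₁, r₂ > 0 with r₁ ≥ 2 and r₁/2 ≤ r₂ ≤ 2r₁, and let σ ∈ {+1, −1}. Suppose a, b₁, b₂ : (0,1) → ℂ are N times continuously differentiable, vanish for λ ≥ λ₀, and satisfy for all 0 ≤ ℓ ≤ N and λ ∈ (0,1): |a^{(ℓ)}(λ)| ≤ C₀ λ^{η−ℓ}, |b₁^{(ℓ)}(λ)| ≤ C₀ λ^{-ℓ} ⟨λr₁⟩^{(n+1)/2−2m+j}, and |b₂^{(ℓ)}(λ)| ≤ C₀ λ^{-ℓ} ⟨λr₂⟩^{(1−n)/2}. Then |∫₀¹ e^{iλ(r₁+σ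 r₂)} a(λ) b₁(λ) b₂(λ) dλ| ≤ C ∫₀¹ λ^{η} ⟨λr₂⟩^{-(2m−1−j)} ⟨λ(r₁−r₂)⟩^{-2} dλ, where C depends only on n, m, j, η, C₀, λ₀. -/
open MeasureTheory

/-!
The phase is `s λ` with `s = r₁ + σ r₂`, and `|r₁ - r₂| ≤ |s|` for either sign. By the Leibniz rule
and `⟨λr₁⟩ ≈ ⟨λr₂⟩`, the amplitude `a b₁ b₂` is a symbol of size
`w(λ) = λ^η ⟨λr₂⟩^{-(2m-1-j)}`: each of its first two derivatives costs a factor `λ⁻¹`.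

For `λ ≤ δ = 1/|s|` the factor `⟨λ(r₁ - r₂)⟩⁻²` is at least `1/2`, so taking absolute values
suffices. For `λ > δ`, two integrations by parts produce `(λs)⁻² w(λ) ≤ 2 w(λ) ⟨λ(r₁ - r₂)⟩⁻²`.
There is no boundary term near `λ = 1`, where the amplitude vanishes, and the boundary terms at `δ`
are of size `δ w(δ)`, which the mass of `w` on `(δ/2, δ]` absorbs because `w` is nearly constant
there.
-/

open scoped Topology

section

open Set

local notation "⟪" t "⟫" => √(1 + t ^ 2)

/-! ### Japanese brackets and comparable weights -/

theorem rpow_le_rpow_abs_mul_rpow {c x y : ℝ} (hx : 0 < x) (hy : 0 < y) (hxy : x ≤ c * y)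
    (hyx : y ≤ c * x) (p : ℝ) : x ^ p ≤ c ^ |p| * y ^ p := by
  have hc : 0 < c := pos_of_mul_pos_left (hx.trans_le hxy) hy.le
  rcases le_total 0 p with hp | hp
  · rw [abs_of_nonneg hp, ← Real.mul_rpow hc.le hy.le]
    exact Real.rpow_le_rpow hx.le hxy hp
  · rw [abs_of_nonpos hp, Real.rpow_neg hc.le, le_inv_mul_iff₀ (Real.rpow_pos_of_pos hc p),
      ← Real.mul_rpow hc.le hx.le]
    exact Real.rpow_le_rpow_of_nonpos hy hyx hp

theorem bracket_le_mul_bracket {c t u : ℝ} (hc : 1 ≤ c) (h : |t| ≤ c * |u|) :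
    ⟪t⟫ ≤ c * ⟪u⟫ := by
  have hsq : t ^ 2 ≤ c ^ 2 * u ^ 2 := by
    simpa only [mul_pow, sq_abs] using pow_le_pow_left₀ (abs_nonneg t) h 2
  rw [Real.sqrt_le_left (by positivity), mul_pow, Real.sq_sqrt (by positivity)]
  linarith [one_le_pow₀ (n := 2) hc]

theorem bracket_rpow_le {c t u : ℝ} (hc : 1 ≤ c) (htu : |t| ≤ c * |u|) (hut : |u| ≤ c * |t|)
    (p : ℝ) : ⟪t⟫ ^ p ≤ c ^ |p| * ⟪u⟫ ^ p :=
  rpow_le_rpow_abs_mul_rpow (by positivity) (by positivity) (bracket_le_mul_bracket hc htu)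
    (bracket_le_mul_bracket hc hut) p

theorem inv_sq_le_two_mul_bracket_rpow_neg_two {t u : ℝ} (hu : 1 ≤ |u|) (htu : |t| ≤ |u|) :
    (u ^ 2)⁻¹ ≤ 2 * ⟪t⟫ ^ (-2 : ℝ) := by
  have hu2 : 1 ≤ u ^ 2 := (one_le_sq_iff_one_le_abs u).2 hu
  rw [Real.rpow_neg (Real.sqrt_nonneg _), Real.rpow_two, Real.sq_sqrt (by positivity),
    ← div_eq_mul_inv, ← one_div, div_le_div_iff₀ (by positivity) (by positivity)]
  linarith [sq_le_sq.2 htu]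

theorem le_two_mul_mul_bracket_rpow_neg_two {t y : ℝ} (hy : 0 ≤ y) (ht : |t| ≤ 1) :
    y ≤ 2 * (y * ⟪t⟫ ^ (-2 : ℝ)) := by
  have hone : 1 ≤ 2 * ⟪t⟫ ^ (-2 : ℝ) := by
    simpa using inv_sq_le_two_mul_bracket_rpow_neg_two (u := 1) (by simp) (by simpa using ht)
  linarith [mul_le_mul_of_nonneg_left hone hy]

theorem abs_mul_le_one {x δ d s : ℝ} (hx : 0 ≤ x) (hxδ : x ≤ δ) (hds : |d| ≤ |s|)
    (hδs : δ * |s| ≤ 1) : |x * d| ≤ 1 := by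
  rw [abs_mul, abs_of_nonneg hx]
  exact (mul_le_mul hxδ hds (abs_nonneg d) (hx.trans hxδ)).trans hδs

theorem continuous_bracket_rpow (r p : ℝ) : Continuous fun x : ℝ => ⟪x * r⟫ ^ p :=
  Continuous.rpow_const (by fun_prop) fun _ => Or.inl (by positivity)

/-- `w` varies at most by the factor `A` between points of `(0,∞)` whose ratio is at most two: the
property of a weight that lets its value at `δ` be recovered from its mass near `δ`. -/
def DyadicallyComparable (A : ℝ) (w : ℝ → ℝ) : Prop :=
  ∀ ⦃x y : ℝ⦄, 0 < x → 0 < y → x ≤ 2 * y → y ≤ 2 * x → w x ≤ A * w y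

namespace DyadicallyComparable

theorem rpow (p : ℝ) : DyadicallyComparable (2 ^ |p|) fun x => x ^ p :=
  fun _ _ hx hy hxy hyx => rpow_le_rpow_abs_mul_rpow hx hy hxy hyx p

theorem bracket_rpow (r p : ℝ) : DyadicallyComparable (2 ^ |p|) fun x => ⟪x * r⟫ ^ p := by
  have abs_mul_le {x y : ℝ} (hx : 0 < x) (hy : 0 < y) (hxy : x ≤ 2 * y) :
      |x * r| ≤ 2 * |y * r| := by
    rw [abs_mul, abs_mul, abs_of_pos hx, abs_of_pos hy, ← mul_assoc]
    gcongr
  exact fun x y hx hy hxy hyx =>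
    bracket_rpow_le one_le_two (abs_mul_le hx hy hxy) (abs_mul_le hy hx hyx) p

variable {A B : ℝ} {w v : ℝ → ℝ}

theorem mul (hw : DyadicallyComparable A w) (hv : DyadicallyComparable B v)
    (hw₀ : ∀ x, 0 < x → 0 ≤ w x) (hv₀ : ∀ x, 0 < x → 0 ≤ v x) :
    DyadicallyComparable (A * B) fun x => w x * v x := fun x y hx hy hxy hyx =>
  calc w x * v x ≤ (A * w y) * (B * v y) :=
        mul_le_mul (hw hx hy hxy hyx) (hv hx hy hxy hyx) (hv₀ x hx)
          ((hw₀ x hx).trans (hw hx hy hxy hyx))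
    _ = A * B * (w y * v y) := by ring

theorem const_mul (hw : DyadicallyComparable A w) {K : ℝ} (hK : 0 ≤ K) :
    DyadicallyComparable A fun x => K * w x := fun x y hx hy hxy hyx =>
  calc K * w x ≤ K * (A * w y) := mul_le_mul_of_nonneg_left (hw hx hy hxy hyx) hK
    _ = A * (K * w y) := by ring

theorem mul_le_setIntegral_mul_bracket (hw : DyadicallyComparable A w) {d δ : ℝ} (hδ : 0 < δ)
    (hδd : |δ * d| ≤ 1) (hA : 0 ≤ A) (hw₀ : ∀ x ∈ Ioc (δ / 2) δ, 0 ≤ w x)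
    (hint : IntegrableOn (fun x => w x * ⟪x * d⟫ ^ (-2 : ℝ)) (Ioc (δ / 2) δ)) :
    δ * w δ ≤ 4 * A * ∫ x in Ioc (δ / 2) δ, w x * ⟪x * d⟫ ^ (-2 : ℝ) := by
  have hle : ∀ x ∈ Ioc (δ / 2) δ, w δ ≤ 2 * A * (w x * ⟪x * d⟫ ^ (-2 : ℝ)) := by
    intro x hx
    have hx₀ : 0 < x := (half_pos hδ).trans hx.1
    have hxd : |x * d| ≤ 1 :=
      abs_mul_le_one hx₀.le hx.2 le_rfl (by rwa [abs_mul, abs_of_pos hδ] at hδd)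
    calc w δ ≤ A * w x := hw hδ hx₀ (by linarith [hx.1]) (by linarith [hx.2])
      _ ≤ A * (2 * (w x * ⟪x * d⟫ ^ (-2 : ℝ))) :=
          mul_le_mul_of_nonneg_left (le_two_mul_mul_bracket_rpow_neg_two (hw₀ x hx) hxd) hA
      _ = 2 * A * (w x * ⟪x * d⟫ ^ (-2 : ℝ)) := by ring
  have hmass := setIntegral_mono_on (by simp) (hint.const_mul (2 * A)) measurableSet_Ioc hle
  rw [setIntegral_const, integral_const_mul, Real.volume_real_Ioc_of_le (by linarith),
    smul_eq_mul] at hmass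
  linarith

end DyadicallyComparable

/-! ### Symbols -/

section Symbol

variable {E : Type*} [NormedAddCommGroup E] [NormedSpace ℝ E] {S : Set ℝ} {k : ℕ}
  {w v : ℝ → ℝ} {f : ℝ → E}

/-- `f` is a symbol of order `k` and size `w` on `S`: it is `C^k` there and each of its first `k`
derivatives costs at most a factor `|x|⁻¹`. The powers of `|x|` stand on the left, so that no
division occurs. -/
structure IsSymbolOn (S : Set ℝ) (k : ℕ) (w : ℝ → ℝ) (f : ℝ → E) : Prop where
  contDiffOn : ContDiffOn ℝ k f S
  pow_mul_norm_le : ∀ ℓ ≤ k, ∀ x ∈ S, |x| ^ ℓ * ‖iteratedDerivWithin ℓ f S x‖ ≤ w x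

theorem hasDerivAt_iteratedDerivWithin (hS : IsOpen S) (hf : ContDiffOn ℝ k f S) {ℓ : ℕ}
    (hℓ : ℓ < k) {x : ℝ} (hx : x ∈ S) :
    HasDerivAt (iteratedDerivWithin ℓ f S) (iteratedDerivWithin (ℓ + 1) f S x) x := by
  rw [iteratedDerivWithin_succ]
  exact (hf.differentiableOn_iteratedDerivWithin (mod_cast hℓ) hS.uniqueDiffOn x
    hx).hasDerivWithinAt.hasDerivAt (hS.mem_nhds hx)

namespace IsSymbolOn

theorem of_norm_le_mul_rpow_neg (hS : S ⊆ Ioi 0) (hf : ContDiffOn ℝ k f S)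
    (hb : ∀ ℓ ≤ k, ∀ x ∈ S, ‖iteratedDerivWithin ℓ f S x‖ ≤ w x * x ^ (-(ℓ : ℝ))) :
    IsSymbolOn S k w f where
  contDiffOn := hf
  pow_mul_norm_le ℓ hℓ x hx := by
    have hx₀ : 0 < x := hS hx
    rw [abs_of_pos hx₀, ← le_div_iff₀' (pow_pos hx₀ ℓ), div_eq_mul_inv, ← Real.rpow_natCast,
      ← Real.rpow_neg hx₀.le]
    exact hb ℓ hℓ x hx

theorem mono (hf : IsSymbolOn S k w f) (hwv : ∀ x ∈ S, w x ≤ v x) : IsSymbolOn S k v f where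
  contDiffOn := hf.contDiffOn
  pow_mul_norm_le ℓ hℓ x hx := (hf.pow_mul_norm_le ℓ hℓ x hx).trans (hwv x hx)

theorem norm_le (hf : IsSymbolOn S k w f) {x : ℝ} (hx : x ∈ S) : ‖f x‖ ≤ w x := by
  simpa using hf.pow_mul_norm_le 0 k.zero_le x hx

theorem nonneg (hf : IsSymbolOn S k w f) {x : ℝ} (hx : x ∈ S) : 0 ≤ w x :=
  (norm_nonneg _).trans (hf.norm_le hx)

theorem mul {R : Type*} [NormedRing R] [NormedAlgebra ℝ R] {f g : ℝ → R}
    (hS : UniqueDiffOn ℝ S) (hf : IsSymbolOn S k w f) (hg : IsSymbolOn S k v g) :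
    IsSymbolOn S k (fun x => 2 ^ k * (w x * v x)) fun x => f x * g x where
  contDiffOn := hf.contDiffOn.mul hg.contDiffOn
  pow_mul_norm_le ℓ hℓ x hx := by
    have hℓk : (ℓ : WithTop ℕ∞) ≤ k := mod_cast hℓ
    have hterm : ∀ i ∈ Finset.range (ℓ + 1),
        |x| ^ ℓ * ‖(ℓ.choose i : R) * iteratedDerivWithin i f S x *
          iteratedDerivWithin (ℓ - i) g S x‖ ≤ ℓ.choose i * (w x * v x) := by
      intro i hi
      have hiℓ : i ≤ ℓ := Finset.mem_range_succ_iff.1 hi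
      rw [← nsmul_eq_mul, smul_mul_assoc]
      calc |x| ^ ℓ * ‖ℓ.choose i • (iteratedDerivWithin i f S x *
            iteratedDerivWithin (ℓ - i) g S x)‖
          ≤ |x| ^ (i + (ℓ - i)) * (ℓ.choose i * (‖iteratedDerivWithin i f S x‖ *
            ‖iteratedDerivWithin (ℓ - i) g S x‖)) := by
            rw [Nat.add_sub_cancel' hiℓ]
            gcongr
            exact (norm_nsmul_le).trans (by gcongr; exact norm_mul_le _ _)
        _ = ℓ.choose i * ((|x| ^ i * ‖iteratedDerivWithin i f S x‖) *
            (|x| ^ (ℓ - i) * ‖iteratedDerivWithin (ℓ - i) g S x‖)) := by rw [pow_add]; ring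
        _ ≤ ℓ.choose i * (w x * v x) := by
            gcongr
            · exact hf.nonneg hx
            · exact hf.pow_mul_norm_le i (hiℓ.trans hℓ) x hx
            · exact hg.pow_mul_norm_le (ℓ - i) ((Nat.sub_le ℓ i).trans hℓ) x hx
    have hwv : 0 ≤ w x * v x := mul_nonneg (hf.nonneg hx) (hg.nonneg hx)
    calc |x| ^ ℓ * ‖iteratedDerivWithin ℓ (f * g) S x‖
        ≤ ∑ i ∈ Finset.range (ℓ + 1), |x| ^ ℓ * ‖(ℓ.choose i : R) *
            iteratedDerivWithin i f S x * iteratedDerivWithin (ℓ - i) g S x‖ := by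
          rw [iteratedDerivWithin_mul hx hS (hf.contDiffOn.of_le hℓk x hx)
            (hg.contDiffOn.of_le hℓk x hx), ← Finset.mul_sum]
          gcongr
          exact norm_sum_le _ _
      _ ≤ ∑ i ∈ Finset.range (ℓ + 1), (ℓ.choose i : ℝ) * (w x * v x) := Finset.sum_le_sum hterm
      _ = 2 ^ ℓ * (w x * v x) := by
          rw [← Finset.sum_mul, ← Nat.cast_sum, Nat.sum_range_choose, Nat.cast_pow, Nat.cast_ofNat]
      _ ≤ 2 ^ k * (w x * v x) := by gcongr; exact one_le_two

theorem mul_mul_bracket {R : Type*} [NormedRing R] [NormedAlgebra ℝ R] {a b₁ b₂ : ℝ → R}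
    {K r₁ r₂ c p q : ℝ} (hS : UniqueDiffOn ℝ S) (hc : 1 ≤ c) (h₁₂ : |r₁| ≤ c * |r₂|)
    (h₂₁ : |r₂| ≤ c * |r₁|) (hK : 0 ≤ K) (ha : IsSymbolOn S k w a)
    (hb₁ : IsSymbolOn S k (fun x => K * ⟪x * r₁⟫ ^ p) b₁)
    (hb₂ : IsSymbolOn S k (fun x => K * ⟪x * r₂⟫ ^ q) b₂) :
    IsSymbolOn S k (fun x => 4 ^ k * K ^ 2 * c ^ |p| * (w x * ⟪x * r₂⟫ ^ (p + q)))
      fun x => a x * b₁ x * b₂ x := by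
  refine ((ha.mul hS hb₁).mul hS hb₂).mono fun x hx => ?_
  have abs_mul_le {r r' : ℝ} (h : |r| ≤ c * |r'|) : |x * r| ≤ c * |x * r'| := by
    rw [abs_mul, abs_mul, mul_left_comm]
    gcongr
  have hw : 0 ≤ w x := ha.nonneg hx
  calc 2 ^ k * (2 ^ k * (w x * (K * ⟪x * r₁⟫ ^ p)) * (K * ⟪x * r₂⟫ ^ q))
      ≤ 2 ^ k * (2 ^ k * (w x * (K * (c ^ |p| * ⟪x * r₂⟫ ^ p))) * (K * ⟪x * r₂⟫ ^ q)) := by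
        gcongr
        exact bracket_rpow_le hc (abs_mul_le h₁₂) (abs_mul_le h₂₁) p
    _ = 4 ^ k * K ^ 2 * c ^ |p| * (w x * ⟪x * r₂⟫ ^ (p + q)) := by
        rw [Real.rpow_add (by positivity), show (4 : ℝ) = 2 * 2 by norm_num, mul_pow (2 : ℝ) 2]
        ring

end IsSymbolOn

end Symbol

/-! ### Oscillatory integrals -/

/-- The oscillating factor `e^{isx}` of frequency `s`. -/
noncomputable def planeWave (s x : ℝ) : ℂ := Complex.exp (Complex.I * Complex.ofReal (s * x))

theorem norm_planeWave (s x : ℝ) : ‖planeWave s x‖ = 1 := Complex.norm_exp_I_mul_ofReal _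

theorem hasDerivAt_planeWave (s x : ℝ) :
    HasDerivAt (planeWave s) ((Complex.I * s) * planeWave s x) x := by
  have hphase : HasDerivAt (fun x : ℝ => Complex.I * Complex.ofReal (s * x)) (Complex.I * s) x := by
    simpa using ((hasDerivAt_id x).const_mul s).ofReal_comp.const_mul Complex.I
  exact hphase.cexp.congr_deriv (mul_comm _ _)

theorem continuous_planeWave (s : ℝ) : Continuous (planeWave s) := by
  unfold planeWave; fun_prop

theorem integrableOn_rpow_mul {η L : ℝ} (hη : -1 < η) (hL : 0 ≤ L) {g : ℝ → ℝ}
    (hg : Continuous g) : IntegrableOn (fun x => x ^ η * g x) (Ioo 0 L) :=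
  (intervalIntegrable_iff_integrableOn_Ioo_of_le hL).1
    ((intervalIntegral.intervalIntegrable_rpow' hη).mul_continuousOn hg.continuousOn)

section Oscillatory

variable {E : Type*} [NormedAddCommGroup E] [NormedSpace ℂ E] {f f' f'' : ℝ → E} {s a b : ℝ}

theorem norm_planeWave_smul (s x : ℝ) (v : E) : ‖planeWave s x • v‖ = ‖v‖ := by
  rw [norm_smul, norm_planeWave, one_mul]

theorem norm_integral_planeWave_smul_le_of_hasDerivAt [CompleteSpace E]
    (hf : ∀ x ∈ uIcc a b, HasDerivAt f (f' x) x) (hf' : IntervalIntegrable f' volume a b) :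
    |s| * ‖∫ x in a..b, planeWave s x • f x‖ ≤
      ‖f a‖ + ‖f b‖ + ‖∫ x in a..b, planeWave s x • f' x‖ := by
  have hparts := intervalIntegral.integral_smul_deriv_eq_deriv_smul
    (fun x _ => hasDerivAt_planeWave s x) hf
    ((continuous_const.mul (continuous_planeWave s)).intervalIntegrable a b) hf'
  simp only [mul_smul, intervalIntegral.integral_smul] at hparts
  calc |s| * ‖∫ x in a..b, planeWave s x • f x‖
      = ‖Complex.I • (s : ℂ) • ∫ x in a..b, planeWave s x • f x‖ := by
        simp [norm_smul]
    _ = ‖planeWave s b • f b - planeWave s a • f a -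
          ∫ x in a..b, planeWave s x • f' x‖ := by rw [hparts, sub_sub_cancel]
    _ ≤ ‖planeWave s b • f b‖ + ‖planeWave s a • f a‖ +
          ‖∫ x in a..b, planeWave s x • f' x‖ := norm_sub_le_of_le (norm_sub_le _ _) le_rfl
    _ = _ := by rw [norm_planeWave_smul, norm_planeWave_smul, add_comm ‖f b‖]

theorem norm_integral_planeWave_smul_le_of_hasDerivAt_twice [CompleteSpace E]
    (hf : ∀ x ∈ uIcc a b, HasDerivAt f (f' x) x) (hf' : ∀ x ∈ uIcc a b, HasDerivAt f' (f'' x) x)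
    (hf'' : IntervalIntegrable f'' volume a b) (hb : f b = 0) (hb' : f' b = 0) :
    s ^ 2 * ‖∫ x in a..b, planeWave s x • f x‖ ≤
      |s| * ‖f a‖ + ‖f' a‖ + ‖∫ x in a..b, planeWave s x • f'' x‖ := by
  have hf'_int : IntervalIntegrable f' volume a b :=
    ContinuousOn.intervalIntegrable fun x hx => (hf' x hx).continuousAt.continuousWithinAt
  have first := norm_integral_planeWave_smul_le_of_hasDerivAt (s := s) hf hf'_int
  have second := norm_integral_planeWave_smul_le_of_hasDerivAt (s := s) hf' hf''
  rw [hb, norm_zero, add_zero] at first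
  rw [hb', norm_zero, add_zero] at second
  calc s ^ 2 * ‖∫ x in a..b, planeWave s x • f x‖
      = |s| * (|s| * ‖∫ x in a..b, planeWave s x • f x‖) := by rw [← sq_abs]; ring
    _ ≤ |s| * (‖f a‖ + ‖∫ x in a..b, planeWave s x • f' x‖) := by gcongr
    _ ≤ _ := by linarith

variable {S T : Set ℝ} {k : ℕ} {w : ℝ → ℝ} {L d δ c lam0 A : ℝ}

theorem setIntegral_planeWave_smul_eq_add (hδ : 0 ≤ δ) (hδc : δ ≤ c) (hcL : c < L)
    (hvan : ∀ x ∈ Ioo c L, f x = 0)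
    (hnear : IntegrableOn (fun x => planeWave s x • f x) (Ioc 0 δ))
    (hfar : IntegrableOn (fun x => planeWave s x • f x) (Ioc δ c)) :
    ∫ x in Ioo 0 L, planeWave s x • f x =
      (∫ x in Ioc 0 δ, planeWave s x • f x) + ∫ x in Ioc δ c, planeWave s x • f x := by
  rw [← setIntegral_union (Ioc_disjoint_Ioc_of_le le_rfl) measurableSet_Ioc hnear hfar,
    Ioc_union_Ioc_eq_Ioc hδ hδc]
  refine setIntegral_eq_of_subset_of_forall_sdiff_eq_zero measurableSet_Ioo
    (fun x hx => ⟨hx.1, hx.2.trans_lt hcL⟩) fun x hx => ?_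
  have hcx : c < x := not_le.1 fun hxc => hx.2 ⟨hx.1.1, hxc⟩
  rw [hvan x ⟨hcx, hx.1.2⟩, smul_zero]

namespace IsSymbolOn

theorem norm_le_two_mul_mul_bracket (hf : IsSymbolOn S k w f) {x : ℝ} (hx : x ∈ S)
    (hxd : |x * d| ≤ 1) : ‖f x‖ ≤ 2 * (w x * ⟪x * d⟫ ^ (-2 : ℝ)) :=
  (hf.norm_le hx).trans (le_two_mul_mul_bracket_rpow_neg_two (hf.nonneg hx) hxd)

theorem norm_iteratedDerivWithin_le_pow_mul (hf : IsSymbolOn S k w f) {ℓ : ℕ} (hℓ : ℓ ≤ k)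
    {x : ℝ} (hx : x ∈ S) (hxs : |x * s| = 1) :
    ‖iteratedDerivWithin ℓ f S x‖ ≤ |s| ^ ℓ * w x :=
  calc ‖iteratedDerivWithin ℓ f S x‖
      = |s| ^ ℓ * (|x| ^ ℓ * ‖iteratedDerivWithin ℓ f S x‖) := by
        rw [← mul_assoc, ← mul_pow, mul_comm |s|, ← abs_mul, hxs, one_pow, one_mul]
    _ ≤ |s| ^ ℓ * w x := by
        gcongr
        exact hf.pow_mul_norm_le ℓ hℓ x hx

theorem norm_iteratedDerivWithin_two_le (hf : IsSymbolOn S 2 w f) {x : ℝ} (hx : x ∈ S)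
    (hxs : 1 ≤ |x * s|) (hds : |d| ≤ |s|) :
    ‖iteratedDerivWithin 2 f S x‖ ≤ s ^ 2 * (2 * (w x * ⟪x * d⟫ ^ (-2 : ℝ))) := by
  have hxs₀ : x * s ≠ 0 := abs_pos.1 (one_pos.trans_le hxs)
  have hxd : |x * d| ≤ |x * s| := by
    rw [abs_mul, abs_mul]
    gcongr
  have hsymbol := hf.pow_mul_norm_le 2 le_rfl x hx
  rw [sq_abs] at hsymbol
  have hx₀ : x ≠ 0 := left_ne_zero_of_mul hxs₀
  have hs₀ : s ≠ 0 := right_ne_zero_of_mul hxs₀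
  calc ‖iteratedDerivWithin 2 f S x‖
      = s ^ 2 * (x ^ 2 * ‖iteratedDerivWithin 2 f S x‖ * ((x * s) ^ 2)⁻¹) := by field_simp
    _ ≤ s ^ 2 * (w x * (2 * ⟪x * d⟫ ^ (-2 : ℝ))) := by
        gcongr
        · exact hf.nonneg hx
        · exact inv_sq_le_two_mul_bracket_rpow_neg_two hxs hxd
    _ = s ^ 2 * (2 * (w x * ⟪x * d⟫ ^ (-2 : ℝ))) := by ring

theorem setIntegral_mul_bracket_mono (hf : IsSymbolOn S k w f) (hS : MeasurableSet S)
    (hTS : T ⊆ S) (hint : IntegrableOn (fun x => w x * ⟪x * d⟫ ^ (-2 : ℝ)) S) :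
    ∫ x in T, w x * ⟪x * d⟫ ^ (-2 : ℝ) ≤ ∫ x in S, w x * ⟪x * d⟫ ^ (-2 : ℝ) :=
  setIntegral_mono_set hint
    (ae_restrict_of_forall_mem hS fun x hx => mul_nonneg (hf.nonneg hx) (by positivity))
    (Filter.Eventually.of_forall hTS)

theorem integrableOn_planeWave_smul (hT : MeasurableSet T) (hTS : T ⊆ S)
    (hf : IsSymbolOn S k w f) (hd : ∀ x ∈ T, |x * d| ≤ 1)
    (hint : IntegrableOn (fun x => w x * ⟪x * d⟫ ^ (-2 : ℝ)) T) :
    IntegrableOn (fun x => planeWave s x • f x) T := by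
  refine (hint.const_mul 2).mono' (((continuous_planeWave s).continuousOn.smul
    (hf.contDiffOn.continuousOn.mono hTS)).aestronglyMeasurable hT) ?_
  filter_upwards [ae_restrict_mem hT] with x hx
  rw [norm_planeWave_smul]
  exact hf.norm_le_two_mul_mul_bracket (hTS hx) (hd x hx)

theorem norm_setIntegral_planeWave_smul_le (hT : MeasurableSet T) (hTS : T ⊆ S)
    (hf : IsSymbolOn S k w f) (hd : ∀ x ∈ T, |x * d| ≤ 1)
    (hint : IntegrableOn (fun x => w x * ⟪x * d⟫ ^ (-2 : ℝ)) T) :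
    ‖∫ x in T, planeWave s x • f x‖ ≤ 2 * ∫ x in T, w x * ⟪x * d⟫ ^ (-2 : ℝ) := by
  rw [← integral_const_mul]
  refine norm_integral_le_of_norm_le (hint.const_mul 2) ?_
  filter_upwards [ae_restrict_mem hT] with x hx
  rw [norm_planeWave_smul]
  exact hf.norm_le_two_mul_mul_bracket (hTS hx) (hd x hx)

theorem norm_integral_planeWave_smul_iteratedDerivWithin_two_le (hf : IsSymbolOn S 2 w f)
    (hδ : 0 < δ) (hδs : δ * |s| = 1) (hds : |d| ≤ |s|) (hS : Ioc δ c ⊆ S)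
    (hint : IntegrableOn (fun x => w x * ⟪x * d⟫ ^ (-2 : ℝ)) (Ioc δ c)) :
    ‖∫ x in Ioc δ c, planeWave s x • iteratedDerivWithin 2 f S x‖ ≤
      s ^ 2 * (2 * ∫ x in Ioc δ c, w x * ⟪x * d⟫ ^ (-2 : ℝ)) := by
  rw [← integral_const_mul, ← integral_const_mul]
  refine norm_integral_le_of_norm_le ((hint.const_mul 2).const_mul (s ^ 2)) ?_
  filter_upwards [ae_restrict_mem measurableSet_Ioc] with x hx
  have hxs : 1 ≤ |x * s| := by
    rw [abs_mul, abs_of_pos (hδ.trans hx.1), ← hδs]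
    gcongr
    exact hx.1.le
  rw [norm_planeWave_smul]
  exact hf.norm_iteratedDerivWithin_two_le (hS hx) hxs hds

variable [CompleteSpace E]

theorem norm_setIntegral_Ioc_planeWave_smul_le (hf : IsSymbolOn (Ioo 0 L) 2 w f) (hδ : 0 < δ)
    (hδs : δ * |s| = 1) (hδc : δ ≤ c) (hcL : c < L) (hc : f =ᶠ[𝓝 c] 0) (hds : |d| ≤ |s|)
    (hint : IntegrableOn (fun x => w x * ⟪x * d⟫ ^ (-2 : ℝ)) (Ioc δ c)) :
    ‖∫ x in Ioc δ c, planeWave s x • f x‖ ≤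
      2 * (δ * w δ) + 2 * ∫ x in Ioc δ c, w x * ⟪x * d⟫ ^ (-2 : ℝ) := by
  have hsub : Icc δ c ⊆ Ioo 0 L := fun x hx => ⟨hδ.trans_le hx.1, hx.2.trans_lt hcL⟩
  have hδS : δ ∈ Ioo 0 L := hsub (left_mem_Icc.2 hδc)
  have hderiv : ∀ ℓ < 2, ∀ x ∈ uIcc δ c, HasDerivAt (iteratedDerivWithin ℓ f (Ioo 0 L))
      (iteratedDerivWithin (ℓ + 1) f (Ioo 0 L) x) x := fun ℓ hℓ x hx =>
    hasDerivAt_iteratedDerivWithin isOpen_Ioo hf.contDiffOn hℓ (hsub (uIcc_of_le hδc ▸ hx))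
  have hf'' : IntervalIntegrable (iteratedDerivWithin 2 f (Ioo 0 L)) volume δ c :=
    ((hf.contDiffOn.continuousOn_iteratedDerivWithin le_rfl
      isOpen_Ioo.uniqueDiffOn).mono hsub).intervalIntegrable_of_Icc hδc
  have hf'c : iteratedDerivWithin 1 f (Ioo 0 L) c = 0 := by
    rw [(hc.filter_mono nhdsWithin_le_nhds).iteratedDerivWithin_eq hc.eq_of_nhds]
    simp
  have hparts := norm_integral_planeWave_smul_le_of_hasDerivAt_twice (s := s)
    (by simpa only [iteratedDerivWithin_zero] using hderiv 0 two_pos) (hderiv 1 one_lt_two) hf''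
    hc.eq_of_nhds hf'c
  rw [intervalIntegral.integral_of_le hδc, intervalIntegral.integral_of_le hδc] at hparts
  have hinterior := hf.norm_integral_planeWave_smul_iteratedDerivWithin_two_le hδ hδs hds
    (Ioc_subset_Icc_self.trans hsub) hint
  have hδs_abs : |δ * s| = 1 := by rw [abs_mul, abs_of_pos hδ, hδs]
  have hslope : ‖iteratedDerivWithin 1 f (Ioo 0 L) δ‖ ≤ |s| * w δ := by
    simpa only [pow_one] using hf.norm_iteratedDerivWithin_le_pow_mul one_le_two hδS hδs_abs
  have hs : 0 < |s| := pos_of_mul_pos_right (hδs ▸ one_pos) hδ.le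
  refine le_of_mul_le_mul_left ?_ (sq_abs s ▸ pow_pos hs 2)
  calc s ^ 2 * ‖∫ x in Ioc δ c, planeWave s x • f x‖
      ≤ |s| * w δ + |s| * w δ + s ^ 2 * (2 * ∫ x in Ioc δ c, w x * ⟪x * d⟫ ^ (-2 : ℝ)) :=
        hparts.trans (by gcongr; exact hf.norm_le hδS)
    _ = s ^ 2 * (2 * (δ * w δ) + 2 * ∫ x in Ioc δ c, w x * ⟪x * d⟫ ^ (-2 : ℝ)) := by
        rw [← sq_abs]
        linear_combination (-2 * |s| * w δ) * hδs

theorem norm_integral_planeWave_smul_le_of_mul_abs_eq_one (hf : IsSymbolOn (Ioo 0 L) 2 w f)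
    (hw : DyadicallyComparable A w) (hA : 0 ≤ A) (hlam0 : lam0 < L)
    (hvan : ∀ x ∈ Ioo lam0 L, f x = 0) (hds : |d| ≤ |s|) (hδ : 0 < δ) (hδs : δ * |s| = 1)
    (hδL : δ < L) (hint : IntegrableOn (fun x => w x * ⟪x * d⟫ ^ (-2 : ℝ)) (Ioo 0 L)) :
    ‖∫ x in Ioo 0 L, planeWave s x • f x‖ ≤
      (4 + 8 * A) * ∫ x in Ioo 0 L, w x * ⟪x * d⟫ ^ (-2 : ℝ) := by
  obtain ⟨c, hc, hcL⟩ := exists_between (max_lt hlam0 hδL)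
  obtain ⟨hlam0c, hδc⟩ := max_lt_iff.1 hc
  have near_sub : Ioc 0 δ ⊆ Ioo 0 L := fun x hx => ⟨hx.1, hx.2.trans_lt hδL⟩
  have far_sub : Icc δ c ⊆ Ioo 0 L := fun x hx => ⟨hδ.trans_le hx.1, hx.2.trans_lt hcL⟩
  have far_sub' : Ioc δ c ⊆ Ioo 0 L := Ioc_subset_Icc_self.trans far_sub
  have half_sub : Ioc (δ / 2) δ ⊆ Ioo 0 L := (Ioc_subset_Ioc_left (half_pos hδ).le).trans near_sub
  have near_le_one : ∀ x ∈ Ioc 0 δ, |x * d| ≤ 1 := fun x hx =>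
    abs_mul_le_one hx.1.le hx.2 hds hδs.le
  have far_int : IntegrableOn (fun x => planeWave s x • f x) (Ioc δ c) :=
    ((continuous_planeWave s).continuousOn.smul
      (hf.contDiffOn.continuousOn.mono far_sub)).integrableOn_Icc.mono_set Ioc_subset_Icc_self
  have hfc : f =ᶠ[𝓝 c] 0 := by
    filter_upwards [Ioo_mem_nhds hlam0c hcL] with x hx using hvan x hx
  have near := hf.norm_setIntegral_planeWave_smul_le (s := s) measurableSet_Ioc near_sub
    near_le_one (hint.mono_set near_sub)
  have far := hf.norm_setIntegral_Ioc_planeWave_smul_le hδ hδs hδc.le hcL hfc hds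
    (hint.mono_set far_sub')
  have boundary := hw.mul_le_setIntegral_mul_bracket hδ (near_le_one δ (right_mem_Ioc.2 hδ)) hA
    (fun x hx => hf.nonneg (half_sub hx)) (hint.mono_set half_sub)
  have mass_le {T : Set ℝ} (hT : T ⊆ Ioo 0 L) := hf.setIntegral_mul_bracket_mono
    measurableSet_Ioo hT hint
  rw [setIntegral_planeWave_smul_eq_add hδ.le hδc.le hcL
    (fun x hx => hvan x ⟨hlam0c.trans hx.1, hx.2⟩)
    (hf.integrableOn_planeWave_smul measurableSet_Ioc near_sub near_le_one
      (hint.mono_set near_sub)) far_int]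
  refine (norm_add_le _ _).trans ?_
  linarith [mass_le near_sub, mass_le far_sub', mul_le_mul_of_nonneg_left (mass_le half_sub) hA]

theorem norm_integral_planeWave_smul_le (hf : IsSymbolOn (Ioo 0 L) 2 w f)
    (hw : DyadicallyComparable A w) (hA : 0 ≤ A) (hlam0 : lam0 < L)
    (hvan : ∀ x ∈ Ioo lam0 L, f x = 0) (hds : |d| ≤ |s|)
    (hint : IntegrableOn (fun x => w x * ⟪x * d⟫ ^ (-2 : ℝ)) (Ioo 0 L)) :
    ‖∫ x in Ioo 0 L, planeWave s x • f x‖ ≤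
      (4 + 8 * A) * ∫ x in Ioo 0 L, w x * ⟪x * d⟫ ^ (-2 : ℝ) := by
  rcases le_or_gt (L * |s|) 1 with hLs | hLs
  · have hbound := hf.norm_setIntegral_planeWave_smul_le (s := s) measurableSet_Ioo subset_rfl
      (fun x hx => abs_mul_le_one hx.1.le hx.2.le hds hLs) hint
    have hmass : 0 ≤ ∫ x in Ioo 0 L, w x * ⟪x * d⟫ ^ (-2 : ℝ) :=
      setIntegral_nonneg measurableSet_Ioo fun x hx => mul_nonneg (hf.nonneg hx) (by positivity)
    linarith [mul_nonneg hA hmass]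
  · have hs : 0 < |s| := (abs_nonneg s).lt_of_ne fun h =>
      zero_le_one.not_gt (by rwa [← h, mul_zero] at hLs)
    have hδs : |s|⁻¹ * |s| = 1 := inv_mul_cancel₀ hs.ne'
    exact hf.norm_integral_planeWave_smul_le_of_mul_abs_eq_one hw hA hlam0 hvan hds
      (inv_pos.2 hs) hδs (lt_of_mul_lt_mul_right (hδs ▸ hLs) hs.le) hint

theorem norm_integral_planeWave_smul_le_rpow_mul_bracket {η M r p : ℝ} (hη : -1 < η)
    (hM : 0 ≤ M) (hf : IsSymbolOn (Ioo 0 L) 2 (fun x => M * (x ^ η * ⟪x * r⟫ ^ p)) f)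
    (hL : 0 ≤ L) (hlam0 : lam0 < L) (hvan : ∀ x ∈ Ioo lam0 L, f x = 0) (hds : |d| ≤ |s|) :
    ‖∫ x in Ioo 0 L, planeWave s x • f x‖ ≤
      (4 + 8 * (2 ^ |η| * 2 ^ |p|)) * M *
        ∫ x in Ioo 0 L, x ^ η * ⟪x * r⟫ ^ p * ⟪x * d⟫ ^ (-2 : ℝ) := by
  have hweight : DyadicallyComparable (2 ^ |η| * 2 ^ |p|)
      fun x => M * (x ^ η * ⟪x * r⟫ ^ p) :=
    ((DyadicallyComparable.rpow η).mul (.bracket_rpow r p)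
      (fun x hx => Real.rpow_nonneg hx.le η) fun x _ => by positivity).const_mul hM
  have hint : IntegrableOn (fun x => x ^ η * (⟪x * r⟫ ^ p * ⟪x * d⟫ ^ (-2 : ℝ))) (Ioo 0 L) :=
    integrableOn_rpow_mul hη hL ((continuous_bracket_rpow r p).mul (continuous_bracket_rpow d (-2)))
  have hbound := hf.norm_integral_planeWave_smul_le hweight (by positivity) hlam0 hvan hds
    (by simpa only [IntegrableOn, mul_assoc] using hint.const_mul M)
  simpa only [mul_assoc, integral_const_mul] using hbound

end IsSymbolOn

end Oscillatory

theorem abs_sub_le_abs_add_mul {x y σ : ℝ} (hx : 0 ≤ x) (hy : 0 ≤ y) (hσ : σ = 1 ∨ σ = -1) :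
    |x - y| ≤ |x + σ * y| := by
  rcases hσ with rfl | rfl
  · rw [one_mul, abs_of_nonneg (add_nonneg hx hy)]
    exact (abs_sub x y).trans_eq (by rw [abs_of_nonneg hx, abs_of_nonneg hy])
  · rw [neg_one_mul, sub_eq_add_neg]

theorem stmt_6_general {η C₀ c : ℝ} (hη : -1 < η) (hC₀ : 0 < C₀) (hc : 1 ≤ c) (p q : ℝ) :
    ∃ C > (0 : ℝ), ∀ L lam0 r₁ r₂ d s : ℝ, 0 < L → lam0 < L →
      |r₁| ≤ c * |r₂| → |r₂| ≤ c * |r₁| → |d| ≤ |s| →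
      ∀ a b₁ b₂ : ℝ → ℂ,
        ContDiffOn ℝ 2 a (Ioo 0 L) → ContDiffOn ℝ 2 b₁ (Ioo 0 L) → ContDiffOn ℝ 2 b₂ (Ioo 0 L) →
        (∀ x ∈ Ioo lam0 L, a x * b₁ x * b₂ x = 0) →
        (∀ ℓ ≤ 2, ∀ x ∈ Ioo 0 L, ‖iteratedDerivWithin ℓ a (Ioo 0 L) x‖ ≤ C₀ * x ^ (η - ℓ)) →
        (∀ ℓ ≤ 2, ∀ x ∈ Ioo 0 L,
          ‖iteratedDerivWithin ℓ b₁ (Ioo 0 L) x‖ ≤ C₀ * x ^ (-(ℓ : ℝ)) * ⟪x * r₁⟫ ^ p) →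
        (∀ ℓ ≤ 2, ∀ x ∈ Ioo 0 L,
          ‖iteratedDerivWithin ℓ b₂ (Ioo 0 L) x‖ ≤ C₀ * x ^ (-(ℓ : ℝ)) * ⟪x * r₂⟫ ^ q) →
        ‖∫ x in Ioo 0 L, Complex.exp (Complex.I * Complex.ofReal (s * x)) *
            (a x * b₁ x * b₂ x)‖ ≤
          C * ∫ x in Ioo 0 L, x ^ η * ⟪x * r₂⟫ ^ (p + q) * ⟪x * d⟫ ^ (-2 : ℝ) := by
  refine ⟨(4 + 8 * (2 ^ |η| * 2 ^ |p + q|)) * (16 * C₀ ^ 3 * c ^ |p|), by positivity, ?_⟩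
  intro L lam0 r₁ r₂ d s hL hlam0 h₁₂ h₂₁ hds a b₁ b₂ ha hb₁ hb₂ hvan ha_le hb₁_le hb₂_le
  have ha_symbol : IsSymbolOn (Ioo 0 L) 2 (fun x => C₀ * x ^ η) a :=
    .of_norm_le_mul_rpow_neg Ioo_subset_Ioi_self ha fun ℓ hℓ x hx => by
      rw [mul_assoc, ← Real.rpow_add hx.1]
      exact ha_le ℓ hℓ x hx
  have hb₁_symbol : IsSymbolOn (Ioo 0 L) 2 (fun x => C₀ * ⟪x * r₁⟫ ^ p) b₁ :=
    .of_norm_le_mul_rpow_neg Ioo_subset_Ioi_self hb₁ fun ℓ hℓ x hx => by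
      rw [mul_right_comm]
      exact hb₁_le ℓ hℓ x hx
  have hb₂_symbol : IsSymbolOn (Ioo 0 L) 2 (fun x => C₀ * ⟪x * r₂⟫ ^ q) b₂ :=
    .of_norm_le_mul_rpow_neg Ioo_subset_Ioi_self hb₂ fun ℓ hℓ x hx => by
      rw [mul_right_comm]
      exact hb₂_le ℓ hℓ x hx
  have hproduct : IsSymbolOn (Ioo 0 L) 2
      (fun x => 16 * C₀ ^ 3 * c ^ |p| * (x ^ η * ⟪x * r₂⟫ ^ (p + q)))
      fun x => a x * b₁ x * b₂ x :=
    (ha_symbol.mul_mul_bracket isOpen_Ioo.uniqueDiffOn hc h₁₂ h₂₁ hC₀.le hb₁_symbol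
      hb₂_symbol).mono fun x _ => le_of_eq (by ring)
  exact hproduct.norm_integral_planeWave_smul_le_rpow_mul_bracket hη (by positivity) hL.le hlam0
    hvan hds

end

/-- Bound on `Λ_{j,η}(r₁,r₂)` when `r₁ ≈ r₂ ≫ 1`. -/
theorem stmt_6 (n m j : ℕ) (hm : 1 ≤ m) (hn : 2 * m < n) (η : ℝ) (hη : -1 < η)
    (C₀ : ℝ) (hC₀ : 0 < C₀) (lam0 : ℝ) (hlam0 : 0 < lam0) (hlam0' : lam0 < 1) :
    ∃ C > (0 : ℝ), ∀ r₁ r₂ : ℝ, 0 < r₁ → 2 ≤ r₁ → 0 < r₂ → r₁ / 2 ≤ r₂ → r₂ ≤ 2 * r₁ →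
      ∀ σ : ℝ, (σ = 1 ∨ σ = -1) →
      ∀ a b₁ b₂ : ℝ → ℂ,
        ContDiffOn ℝ ((n + 1) / 2 + 1 : ℕ) a (Set.Ioo 0 1) →
        ContDiffOn ℝ ((n + 1) / 2 + 1 : ℕ) b₁ (Set.Ioo 0 1) →
        ContDiffOn ℝ ((n + 1) / 2 + 1 : ℕ) b₂ (Set.Ioo 0 1) →
        (∀ lam : ℝ, lam0 ≤ lam → a lam = 0) →
        (∀ lam : ℝ, lam0 ≤ lam → b₁ lam = 0) →
        (∀ lam : ℝ, lam0 ≤ lam → b₂ lam = 0) →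
        (∀ ℓ ≤ (n + 1) / 2 + 1, ∀ lam ∈ Set.Ioo (0 : ℝ) 1,
          ‖iteratedDerivWithin ℓ a (Set.Ioo 0 1) lam‖ ≤ C₀ * lam ^ (η - ℓ)) →
        (∀ ℓ ≤ (n + 1) / 2 + 1, ∀ lam ∈ Set.Ioo (0 : ℝ) 1,
          ‖iteratedDerivWithin ℓ b₁ (Set.Ioo 0 1) lam‖ ≤
            C₀ * lam ^ (-(ℓ : ℝ)) *
              Real.sqrt (1 + (lam * r₁) ^ 2) ^ (((n : ℝ) + 1) / 2 - 2 * m + j)) →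
        (∀ ℓ ≤ (n + 1) / 2 + 1, ∀ lam ∈ Set.Ioo (0 : ℝ) 1,
          ‖iteratedDerivWithin ℓ b₂ (Set.Ioo 0 1) lam‖ ≤
            C₀ * lam ^ (-(ℓ : ℝ)) *
              Real.sqrt (1 + (lam * r₂) ^ 2) ^ ((1 - (n : ℝ)) / 2)) →
        ‖∫ lam in Set.Ioo (0 : ℝ) 1,
            Complex.exp (Complex.I * Complex.ofReal ((r₁ + σ * r₂) * lam)) *
              (a lam * b₁ lam * b₂ lam)‖ ≤
          C * ∫ lam in Set.Ioo (0 : ℝ) 1,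
            lam ^ η * Real.sqrt (1 + (lam * r₂) ^ 2) ^ (-(2 * (m : ℝ) - 1 - j)) *
              Real.sqrt (1 + (lam * (r₁ - r₂)) ^ 2) ^ (-(2 : ℝ)) := by
  have hN : 2 ≤ (n + 1) / 2 + 1 := by omega
  have hN' : (2 : WithTop ℕ∞) ≤ ((n + 1) / 2 + 1 : ℕ) := mod_cast hN
  obtain ⟨C, hC, hbound⟩ := stmt_6_general hη hC₀ one_le_two
    (((n : ℝ) + 1) / 2 - 2 * m + j) ((1 - (n : ℝ)) / 2)
  rw [show ((n : ℝ) + 1) / 2 - 2 * m + j + (1 - (n : ℝ)) / 2 = -(2 * (m : ℝ) - 1 - j) by ring]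
    at hbound
  refine ⟨C, hC, ?_⟩
  intro r₁ r₂ hr₁ _ hr₂ h₁₂ h₂₁ σ hσ a b₁ b₂ ha hb₁ hb₂ ha₀ _ _ ha_le hb₁_le hb₂_le
  have hr₁₂ : |r₁| ≤ 2 * |r₂| := by
    rw [abs_of_pos hr₁, abs_of_pos hr₂]
    linarith
  have hr₂₁ : |r₂| ≤ 2 * |r₁| := by rwa [abs_of_pos hr₁, abs_of_pos hr₂]
  exact hbound 1 lam0 r₁ r₂ (r₁ - r₂) (r₁ + σ * r₂) one_pos hlam0' hr₁₂ hr₂₁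
    (abs_sub_le_abs_add_mul hr₁.le hr₂.le hσ) a b₁ b₂
    (ha.of_le hN') (hb₁.of_le hN') (hb₂.of_le hN')
    (fun x hx => by rw [ha₀ x hx.1.le, zero_mul, zero_mul])
    (fun ℓ hℓ => ha_le ℓ (hℓ.trans hN)) (fun ℓ hℓ => hb₁_le ℓ (hℓ.trans hN))
    fun ℓ hℓ => hb₂_le ℓ (hℓ.trans hN)
end

section
/- Let n ≥ 1, k₀ ≥ 1, j ≥ 0 be integers with j ≤ k₀ − 1. Suppose g₁, g₂ : ℝⁿ → ℂ are measurable with ∫_{ℝⁿ} ⟨x⟩^{2j} |g_i(x)| dx < ∞ for i = 1,2, and ∫_{ℝⁿ} x^α g_i(x) dx = 0 for i = 1,2 and every multi-index α with |α| ≤ k₀ − 1. Then ∫_{ℝⁿ} ∫_{ℝⁿ} \overline{g₁(x)} |x−y|^{2j} g₂(y) dy dx = 0. -/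
open MeasureTheory

/-!
The kernel `‖x - y‖ ^ (2 * j)` is a homogeneous polynomial of degree `2 * j` in the coordinates of
`x` and `y`, i.e. a finite sum of terms `c * x ^ α * y ^ β` with `|α| + |β| = 2 * j`. All the
moments of order at most `2 * j` converge absolutely, so each term contributes the product of a
moment of `conj g₁` of order `|α|` and a moment of `g₂` of order `|β|`. Since `2 * j < k₀ + k₀`, one
of the two orders is less than `k₀`, and that moment vanishes.
-/

open scoped ComplexConjugate

section PolynomialKernel

open MvPolynomial

variable {ι κ R : Type*} [Fintype ι] [Fintype κ]

theorem eval_sumElim_eq_sum [CommSemiring R] (P : MvPolynomial (ι ⊕ κ) R) (u : ι → R) (v : κ → R) :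
    eval (Sum.elim u v) P = ∑ m ∈ P.support,
      P.coeff m * ((∏ i, u i ^ m (Sum.inl i)) * ∏ i, v i ^ m (Sum.inr i)) := by
  simp only [eval_eq', Fintype.prod_sum_type, Sum.elim_inl, Sum.elim_inr]

theorem sum_inl_add_sum_inr_le_totalDegree [CommSemiring R] {P : MvPolynomial (ι ⊕ κ) R}
    {m : ι ⊕ κ →₀ ℕ} (hm : m ∈ P.support) :
    ∑ i, m (Sum.inl i) + ∑ i, m (Sum.inr i) ≤ P.totalDegree := by
  simpa only [Finsupp.sum_fintype, Fintype.sum_sum_type, implies_true] using le_totalDegree hm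

variable {X Y 𝕜 : Type*} [MeasurableSpace X] [MeasurableSpace Y] [RCLike 𝕜]
  {μ : Measure X} {ν : Measure Y}

theorem integral_integral_finsetSum_mul {σ : Type*} {s : Finset σ} {a : σ → X → 𝕜} {b : σ → Y → 𝕜}
    (ha : ∀ m ∈ s, Integrable (a m) μ) (hb : ∀ m ∈ s, Integrable (b m) ν) :
    ∫ x, ∫ y, ∑ m ∈ s, a m x * b m y ∂ν ∂μ = ∑ m ∈ s, (∫ x, a m x ∂μ) * ∫ y, b m y ∂ν :=
  calc ∫ x, ∫ y, ∑ m ∈ s, a m x * b m y ∂ν ∂μ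
      = ∫ x, ∑ m ∈ s, a m x * ∫ y, b m y ∂ν ∂μ := by
        simp only [integral_finsetSum s fun m hm => (hb m hm).const_mul _, integral_const_mul]
    _ = ∑ m ∈ s, (∫ x, a m x ∂μ) * ∫ y, b m y ∂ν := by
        simp only [integral_finsetSum s fun m hm => (ha m hm).mul_const _, integral_mul_const]

theorem integral_integral_mul_eval_mul_eq_zero {k l : ℕ} {u : X → ι → 𝕜} {v : Y → κ → 𝕜}
    {f : X → 𝕜} {g : Y → 𝕜} {P : MvPolynomial (ι ⊕ κ) 𝕜} (hP : P.totalDegree < k + l)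
    (hf : ∀ α : ι → ℕ, ∑ i, α i ≤ P.totalDegree → Integrable (fun x => (∏ i, u x i ^ α i) * f x) μ)
    (hg : ∀ β : κ → ℕ, ∑ i, β i ≤ P.totalDegree → Integrable (fun y => (∏ i, v y i ^ β i) * g y) ν)
    (hf₀ : ∀ α : ι → ℕ, ∑ i, α i < k → ∫ x, (∏ i, u x i ^ α i) * f x ∂μ = 0)
    (hg₀ : ∀ β : κ → ℕ, ∑ i, β i < l → ∫ y, (∏ i, v y i ^ β i) * g y ∂ν = 0) :
    ∫ x, ∫ y, f x * eval (Sum.elim (u x) (v y)) P * g y ∂ν ∂μ = 0 := by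
  have separated (x : X) (y : Y) : f x * eval (Sum.elim (u x) (v y)) P * g y =
      ∑ m ∈ P.support, P.coeff m * ((∏ i, u x i ^ m (Sum.inl i)) * f x) *
        ((∏ i, v y i ^ m (Sum.inr i)) * g y) := by
    rw [eval_sumElim_eq_sum, Finset.mul_sum, Finset.sum_mul]
    exact Finset.sum_congr rfl fun m _ => by ring
  have degree_le {m : ι ⊕ κ →₀ ℕ} (hm : m ∈ P.support) := sum_inl_add_sum_inr_le_totalDegree hm
  simp only [separated]
  rw [integral_integral_finsetSum_mul
    (fun m hm => (hf _ (le_of_add_le_left (degree_le hm))).const_mul _)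
    (fun m hm => hg _ (le_of_add_le_right (degree_le hm)))]
  refine Finset.sum_eq_zero fun m hm => ?_
  have low_order : ∑ i, m (Sum.inl i) < k ∨ ∑ i, m (Sum.inr i) < l := by
    have := degree_le hm
    omega
  rcases low_order with hk | hl
  · rw [integral_const_mul, hf₀ _ hk, mul_zero, zero_mul]
  · rw [hg₀ _ hl, mul_zero]

end PolynomialKernel

section SqDistPolynomial

open MvPolynomial

variable (ι R : Type*) [Fintype ι] [CommRing R]

/-- The squared Euclidean distance `∑ i, (xᵢ - yᵢ) ^ 2` as a polynomial, where `Sum.inl` indexes the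
coordinates of `x` and `Sum.inr` those of `y`. -/
noncomputable def sqDistPolynomial : MvPolynomial (ι ⊕ ι) R :=
  ∑ i, (X (Sum.inl i) - X (Sum.inr i)) ^ 2

theorem isHomogeneous_sqDistPolynomial : (sqDistPolynomial ι R).IsHomogeneous 2 :=
  IsHomogeneous.sum _ _ _ fun _ _ => ((isHomogeneous_X R _).sub (isHomogeneous_X R _)).pow 2

variable {ι}

theorem eval_sqDistPolynomial_ofReal {𝕜 : Type*} [RCLike 𝕜] (x y : EuclideanSpace ℝ ι) :
    eval (Sum.elim (fun i => (x i : 𝕜)) fun i => (y i : 𝕜)) (sqDistPolynomial ι 𝕜) =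
      ((‖x - y‖ ^ 2 : ℝ) : 𝕜) := by
  simp [sqDistPolynomial, EuclideanSpace.real_norm_sq_eq]

end SqDistPolynomial

section Moments

theorem pow_le_one_add_sq_pow {d j : ℕ} (hd : d ≤ 2 * j) {t : ℝ} (ht : 0 ≤ t) :
    t ^ d ≤ (1 + t ^ 2) ^ j :=
  calc t ^ d ≤ √(1 + t ^ 2) ^ d := by gcongr; exact Real.le_sqrt_of_sq_le (by linarith)
    _ ≤ √(1 + t ^ 2) ^ (2 * j) :=
        pow_le_pow_right₀ (Real.one_le_sqrt.2 (by linarith [sq_nonneg t])) hd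
    _ = (1 + t ^ 2) ^ j := by rw [pow_mul, Real.sq_sqrt (by positivity)]

variable {ι : Type*} [Fintype ι]

theorem norm_prod_pow_le_norm_pow {𝕜 : Type*} [NormedField 𝕜] (x : EuclideanSpace 𝕜 ι)
    (α : ι → ℕ) : ‖∏ i, x i ^ α i‖ ≤ ‖x‖ ^ ∑ i, α i :=
  calc ‖∏ i, x i ^ α i‖ = ∏ i, ‖x i‖ ^ α i := by simp only [norm_prod, norm_pow]
    _ ≤ ∏ i, ‖x‖ ^ α i := by gcongr with i; exact PiLp.norm_apply_le x i
    _ = ‖x‖ ^ ∑ i, α i := Finset.prod_pow_eq_pow_sum _ _ _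

theorem integrable_prod_pow_smul {E : Type*} [NormedAddCommGroup E] [NormedSpace ℝ E]
    {μ : Measure (EuclideanSpace ℝ ι)} {g : EuclideanSpace ℝ ι → E} {j : ℕ}
    (hg : AEStronglyMeasurable g μ) (hint : Integrable (fun x => (1 + ‖x‖ ^ 2) ^ j * ‖g x‖) μ)
    {α : ι → ℕ} (hα : ∑ i, α i ≤ 2 * j) : Integrable (fun x => (∏ i, x i ^ α i) • g x) μ := by
  have monomial_continuous : Continuous fun x : EuclideanSpace ℝ ι => ∏ i, x i ^ α i := by fun_prop
  refine hint.mono' (monomial_continuous.aestronglyMeasurable.smul hg) (.of_forall fun x => ?_)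
  rw [norm_smul]
  gcongr
  exact (norm_prod_pow_le_norm_pow x α).trans (pow_le_one_add_sq_pow hα (norm_nonneg x))

theorem integral_ofReal_mul_conj {X 𝕜 : Type*} [MeasurableSpace X] [RCLike 𝕜] {μ : Measure X}
    (r : X → ℝ) (f : X → 𝕜) :
    ∫ x, (r x : 𝕜) * conj (f x) ∂μ = conj (∫ x, (r x : 𝕜) * f x ∂μ) := by
  simp only [← integral_conj, map_mul, RCLike.conj_ofReal]

end Moments

theorem stmt_10_general {ι 𝕜 : Type*} [Fintype ι] [RCLike 𝕜] {k₁ k₂ j : ℕ} (hj : 2 * j < k₁ + k₂)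
    {μ ν : Measure (EuclideanSpace ℝ ι)} {g₁ g₂ : EuclideanSpace ℝ ι → 𝕜}
    (hg₁ : AEStronglyMeasurable g₁ μ) (hg₂ : AEStronglyMeasurable g₂ ν)
    (hint₁ : Integrable (fun x => (1 + ‖x‖ ^ 2) ^ j * ‖g₁ x‖) μ)
    (hint₂ : Integrable (fun x => (1 + ‖x‖ ^ 2) ^ j * ‖g₂ x‖) ν)
    (hmom₁ : ∀ α : ι → ℕ, ∑ i, α i < k₁ → ∫ x, ((∏ i, x i ^ α i : ℝ) : 𝕜) * g₁ x ∂μ = 0)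
    (hmom₂ : ∀ α : ι → ℕ, ∑ i, α i < k₂ → ∫ x, ((∏ i, x i ^ α i : ℝ) : 𝕜) * g₂ x ∂ν = 0) :
    ∫ x, ∫ y, conj (g₁ x) * ((‖x - y‖ ^ (2 * j) : ℝ) : 𝕜) * g₂ y ∂ν ∂μ = 0 := by
  have kernel (x y : EuclideanSpace ℝ ι) : ((‖x - y‖ ^ (2 * j) : ℝ) : 𝕜) =
      MvPolynomial.eval (Sum.elim (fun i => (x i : 𝕜)) fun i => (y i : 𝕜))
        (sqDistPolynomial ι 𝕜 ^ j) := by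
    rw [map_pow, eval_sqDistPolynomial_ofReal, pow_mul, RCLike.ofReal_pow _ j]
  have degree_le : (sqDistPolynomial ι 𝕜 ^ j).totalDegree ≤ 2 * j :=
    ((isHomogeneous_sqDistPolynomial ι 𝕜).pow j).totalDegree_le
  have monomial (x : EuclideanSpace ℝ ι) (α : ι → ℕ) :
      ∏ i, (x i : 𝕜) ^ α i = ((∏ i, x i ^ α i : ℝ) : 𝕜) := by push_cast; rfl
  simp only [kernel]
  refine integral_integral_mul_eval_mul_eq_zero (degree_le.trans_lt hj) (fun α hα => ?_)
    (fun β hβ => ?_) (fun α hα => ?_) (fun β hβ => ?_) <;> simp only [monomial]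
  · simpa only [RCLike.real_smul_eq_coe_mul] using integrable_prod_pow_smul
      (RCLike.continuous_conj.comp_aestronglyMeasurable hg₁)
      (by simpa only [RCLike.norm_conj] using hint₁) (hα.trans degree_le)
  · simpa only [RCLike.real_smul_eq_coe_mul] using
      integrable_prod_pow_smul hg₂ hint₂ (hβ.trans degree_le)
  · rw [integral_ofReal_mul_conj, hmom₁ α hα, map_zero]
  · exact hmom₂ β hβ

/-- Two-sided cancellation: if `g₁, g₂` have vanishing moments up to order `k₀−1` and
`j ≤ k₀−1`, then `∫∫ conj(g₁(x)) |x−y|^{2j} g₂(y) dy dx = 0`. -/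
theorem stmt_10 (n k₀ j : ℕ) (hn : 1 ≤ n) (hk₀ : 1 ≤ k₀) (hj : j + 1 ≤ k₀)
    (g₁ g₂ : EuclideanSpace ℝ (Fin n) → ℂ) (hg₁ : Measurable g₁) (hg₂ : Measurable g₂)
    (hint₁ : Integrable (fun x : EuclideanSpace ℝ (Fin n) => (1 + ‖x‖ ^ 2) ^ j * ‖g₁ x‖))
    (hint₂ : Integrable (fun x : EuclideanSpace ℝ (Fin n) => (1 + ‖x‖ ^ 2) ^ j * ‖g₂ x‖))
    (hmom₁ : ∀ α : Fin n → ℕ, (∑ i, α i) < k₀ →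
      ∫ x, ((∏ i, (x i) ^ (α i) : ℝ) : ℂ) * g₁ x = 0)
    (hmom₂ : ∀ α : Fin n → ℕ, (∑ i, α i) < k₀ →
      ∫ x, ((∏ i, (x i) ^ (α i) : ℝ) : ℂ) * g₂ x = 0) :
    ∫ x, ∫ y, (starRingEnd ℂ) (g₁ x) * ((‖x - y‖ ^ (2 * j) : ℝ) : ℂ) * g₂ y = 0 :=
  stmt_10_general (by omega) hg₁.aestronglyMeasurable hg₂.aestronglyMeasurable
    hint₁ hint₂ hmom₁ hmom₂
end

section
/- Let n ≥ 1 and i ≥ 1 be integers. There exists a constant C_i (depending only on i) such that for all x, z ∈ ℝⁿ and s ∈ ℝ with x ≠ sz, the i-th derivative with respect to s of the function s ↦ |x − sz| satisfies | (d/ds)^i |x − sz| | ≤ C_i |x − sz|^{1−i} |z|^{i}. -/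
/-!
Leibniz' rule for `f * f` expresses `2 f f⁽ⁿ⁺¹⁾` through `(f²)⁽ⁿ⁺¹⁾` and the products
`f⁽ᵏ⁺¹⁾ f⁽ⁿ⁻ᵏ⁾` with `k < n`. Divided by `(n + 1)!`, the resulting recursive bounds on the Taylor
coefficients of `f` are those of the Catalan recurrence, so geometric bounds on the Taylor
coefficients of `f²` pass to `f` at the cost of a Catalan number, wherever `f ≠ 0`.
For `f t = ‖x - t • z‖` the square is a quadratic polynomial, whose Taylor coefficients at `s` are
bounded geometrically with ratio `2 ‖z‖ / ‖x - s • z‖` by the Cauchy–Schwarz inequality.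
-/

open MeasureTheory
open Finset
open scoped Nat

theorem catalan_pos (n : ℕ) : 0 < catalan n :=
  Nat.pos_of_mul_pos_left (succ_mul_catalan_eq_centralBinom n ▸ n.centralBinom_pos)

theorem sum_range_catalan_mul_catalan_le (n : ℕ) :
    ∑ k ∈ range n, catalan k * catalan (n - 1 - k) ≤ catalan n := by
  cases n with
  | zero => simp
  | succ n => rw [catalan_succ', Nat.sum_antidiagonal_eq_sum_range_succ_mk, Nat.add_sub_cancel]

theorem norm_sum_choose_mul_mul_le {R : Type*} [SeminormedRing R] {u : ℕ → R} {A ρ : ℝ} {n : ℕ}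
    (hu : ∀ k < n, ‖u (k + 1)‖ ≤ (k + 1)! * catalan k * A * ρ ^ (k + 1)) :
    ‖∑ k ∈ range n, (n + 1).choose (k + 1) * u (k + 1) * u (n - k)‖ ≤
      (n + 1)! * (∑ k ∈ range n, catalan k * catalan (n - 1 - k) : ℕ) * A ^ 2 * ρ ^ (n + 1) := by
  push_cast
  simp only [mul_sum, sum_mul]
  refine norm_sum_le_of_le _ fun k hk => ?_
  obtain ⟨l, rfl⟩ := Nat.exists_eq_add_of_lt (mem_range.1 hk)
  have hsub : k + l + 1 - k = l + 1 := by lia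
  have hsub_one : k + l + 1 - 1 - k = l := by lia
  have hchoose : ((k + l + 1 + 1)! : ℝ) =
      (k + l + 1 + 1).choose (k + 1) * (l + 1)! * (k + 1)! := by
    rw [show k + l + 1 + 1 = l + 1 + (k + 1) by lia]
    exact_mod_cast (Nat.add_choose_mul_factorial_mul_factorial (l + 1) (k + 1)).symm
  rw [hsub, hsub_one, hchoose, mul_assoc, ← nsmul_eq_mul]
  calc
    _ ≤ (k + l + 1 + 1).choose (k + 1) * ‖u (k + 1) * u (l + 1)‖ := norm_nsmul_le
    _ ≤ (k + l + 1 + 1).choose (k + 1) * (((k + 1)! * catalan k * A * ρ ^ (k + 1)) *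
        ((l + 1)! * catalan l * A * ρ ^ (l + 1))) := by
      gcongr
      exact norm_mul_le_of_le (hu k (by lia)) (hu l (by lia))
    _ = _ := by ring

section Square

variable {𝕜 : Type*} [NontriviallyNormedField 𝕜] {a : 𝕜} {n : ℕ}

theorem iteratedDeriv_succ_fun_sq {R : Type*} [NormedCommRing R] [NormedAlgebra 𝕜 R] {f : 𝕜 → R}
    (hf : ContDiffAt 𝕜 (n + 1 : ℕ) f a) :
    iteratedDeriv (n + 1) (fun t => f t ^ 2) a =
      2 * f a * iteratedDeriv (n + 1) f a +
        ∑ k ∈ range n,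
          (n + 1).choose (k + 1) * iteratedDeriv (k + 1) f a * iteratedDeriv (n - k) f a := by
  simp only [sq]
  rw [iteratedDeriv_fun_mul hf hf, sum_range_succ, sum_range_succ']
  simp only [Nat.choose_zero_right, Nat.choose_self, Nat.sub_self, Nat.sub_zero,
    iteratedDeriv_zero, Nat.cast_one, one_mul, Nat.add_sub_add_right]
  ring

theorem norm_iteratedDeriv_succ_le_of_sq {F : Type*} [RCLike F] [NormedAlgebra 𝕜 F] {f : 𝕜 → F}
    {ρ : ℝ} (hfa : f a ≠ 0) (hf : ContDiffAt 𝕜 (n + 1 : ℕ) f a)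
    (hsq : ∀ k ≤ n, ‖iteratedDeriv (k + 1) (fun t => f t ^ 2) a‖ ≤
      (k + 1)! * ‖f a‖ ^ 2 * ρ ^ (k + 1)) :
    ‖iteratedDeriv (n + 1) f a‖ ≤ (n + 1)! * catalan n * ‖f a‖ * ρ ^ (n + 1) := by
  induction n using Nat.strong_induction_on with
  | _ n ih =>
  have hsq_norm := hsq n le_rfl
  have hsum_norm := norm_sum_choose_mul_mul_le (u := fun k => iteratedDeriv k f a) fun k hk =>
    ih k hk (hf.of_le (by exact_mod_cast Nat.succ_le_succ hk.le)) fun j hj => hsq j (hj.trans hk.le)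
  have hbound_nonneg : 0 ≤ (n + 1)! * ‖f a‖ ^ 2 * ρ ^ (n + 1) := (norm_nonneg _).trans hsq_norm
  have hcatalan : (1 : ℝ) ≤ catalan n := mod_cast catalan_pos n
  have hsum_catalan : ((∑ k ∈ range n, catalan k * catalan (n - 1 - k) : ℕ) : ℝ) ≤ catalan n :=
    mod_cast sum_range_catalan_mul_catalan_le n
  have hLeibniz := eq_sub_of_add_eq (iteratedDeriv_succ_fun_sq hf).symm
  refine le_of_mul_le_mul_left ?_ (by positivity : 0 < 2 * ‖f a‖)
  calc
    2 * ‖f a‖ * ‖iteratedDeriv (n + 1) f a‖ = ‖2 * f a * iteratedDeriv (n + 1) f a‖ := by simp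
    _ ≤ (n + 1)! * ‖f a‖ ^ 2 * ρ ^ (n + 1) +
        (n + 1)! * (∑ k ∈ range n, catalan k * catalan (n - 1 - k) : ℕ) * ‖f a‖ ^ 2 *
          ρ ^ (n + 1) := hLeibniz ▸ norm_sub_le_of_le hsq_norm hsum_norm
    _ = (1 + (∑ k ∈ range n, catalan k * catalan (n - 1 - k) : ℕ)) *
        ((n + 1)! * ‖f a‖ ^ 2 * ρ ^ (n + 1)) := by ring
    _ ≤ (catalan n + catalan n) * ((n + 1)! * ‖f a‖ ^ 2 * ρ ^ (n + 1)) := by gcongr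
    _ = 2 * ‖f a‖ * ((n + 1)! * catalan n * ‖f a‖ * ρ ^ (n + 1)) := by ring

end Square

theorem hasDerivAt_sub_smul {𝕜 E : Type*} [NontriviallyNormedField 𝕜] [NormedAddCommGroup E]
    [NormedSpace 𝕜 E] (x z : E) (s : 𝕜) : HasDerivAt (fun t : 𝕜 => x - t • z) (-z) s := by
  simpa using ((hasDerivAt_id s).smul_const z).const_sub x

section Norm

variable {E : Type*} [NormedAddCommGroup E] [InnerProductSpace ℝ E] {x z : E} {s : ℝ}

theorem deriv_norm_sub_smul_sq (x z : E) :
    deriv (fun t : ℝ => ‖x - t • z‖ ^ 2) = fun t => -2 * inner ℝ (x - t • z) z := by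
  funext t
  rw [(hasDerivAt_sub_smul x z t).norm_sq.deriv, inner_neg_right]
  ring

theorem deriv_deriv_norm_sub_smul_sq (x z : E) :
    deriv (deriv fun t : ℝ => ‖x - t • z‖ ^ 2) = fun _ => 2 * ‖z‖ ^ 2 := by
  rw [deriv_norm_sub_smul_sq]
  funext t
  rw [(((hasDerivAt_sub_smul x z t).inner ℝ (hasDerivAt_const t z)).const_mul (-2)).deriv]
  simp

theorem abs_iteratedDeriv_succ_norm_sub_smul_sq_le (hs : x ≠ s • z) (k : ℕ) :
    |iteratedDeriv (k + 1) (fun t : ℝ => ‖x - t • z‖ ^ 2) s| ≤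
      (k + 1)! * ‖x - s • z‖ ^ 2 * (2 * ‖z‖ / ‖x - s • z‖) ^ (k + 1) := by
  have hpos : 0 < ‖x - s • z‖ := norm_pos_iff.2 (sub_ne_zero.2 hs)
  match k with
  | 0 =>
    calc
      _ = 2 * |inner ℝ (x - s • z) z| := by
        simp [iteratedDeriv_one, deriv_norm_sub_smul_sq, abs_mul]
      _ ≤ 2 * (‖x - s • z‖ * ‖z‖) := by gcongr; exact abs_real_inner_le_norm _ _
      _ = _ := by
        simp only [zero_add, Nat.factorial_one, Nat.cast_one, one_mul, pow_one]
        field_simp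
  | 1 =>
    calc
      _ = 2 * ‖z‖ ^ 2 := by simp [iteratedDeriv_succ', deriv_deriv_norm_sub_smul_sq]
      _ ≤ 2 * (2 * ‖z‖) ^ 2 := by gcongr; linarith [norm_nonneg z]
      _ = _ := by
        rw [one_add_one_eq_two, Nat.factorial_two, Nat.cast_two]
        field_simp
  | k + 2 =>
    rw [iteratedDeriv_succ', iteratedDeriv_succ', deriv_deriv_norm_sub_smul_sq,
      iteratedDeriv_const, if_neg k.succ_ne_zero, abs_zero]
    positivity

theorem stmt_12_general (n : ℕ) (hs : x ≠ s • z) :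
    |iteratedDeriv (n + 1) (fun t : ℝ => ‖x - t • z‖) s| ≤
      (n + 1)! * catalan n * 2 ^ (n + 1) * ‖x - s • z‖ ^ (-n : ℝ) * ‖z‖ ^ (n + 1) := by
  have hw : x - s • z ≠ 0 := sub_ne_zero.2 hs
  have hpos : 0 < ‖x - s • z‖ := norm_pos_iff.2 hw
  have hf : ContDiffAt ℝ (n + 1 : ℕ) (fun t : ℝ => ‖x - t • z‖) s :=
    ContDiffAt.norm ℝ (by fun_prop) hw
  calc
    _ ≤ (n + 1)! * catalan n * ‖x - s • z‖ * (2 * ‖z‖ / ‖x - s • z‖) ^ (n + 1) := by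
      simpa using norm_iteratedDeriv_succ_le_of_sq (f := fun t : ℝ => ‖x - t • z‖) hpos.ne' hf
        fun k _ => by simpa using abs_iteratedDeriv_succ_norm_sub_smul_sq_le hs k
    _ = _ := by
      rw [Real.rpow_neg hpos.le, Real.rpow_natCast, div_pow, mul_pow]
      field_simp
      ring

end Norm

/-- Bound for the `i`-th derivative of `s ↦ |x − sz|`:
`|(d/ds)^i |x − sz|| ≤ C_i |x − sz|^{1−i} |z|^i`. -/
theorem stmt_12 (i : ℕ) (hi : 1 ≤ i) :
    ∃ C > (0 : ℝ), ∀ (n : ℕ), 1 ≤ n →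
      ∀ (x z : EuclideanSpace ℝ (Fin n)) (s : ℝ), x ≠ s • z →
        |iteratedDeriv i (fun t : ℝ => ‖x - t • z‖) s| ≤
          C * ‖x - s • z‖ ^ ((1 : ℝ) - i) * ‖z‖ ^ i := by
  obtain ⟨k, rfl⟩ := Nat.exists_eq_add_of_le' hi
  have hC : (0 : ℝ) < (k + 1)! * catalan k * 2 ^ (k + 1) := by
    have := catalan_pos k
    positivity
  exact ⟨_, hC, fun _ _ _ _ _ hs => by simpa using stmt_12_general k hs⟩
end
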